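/- For integers n ≥ k ≥ d ≥ 1, the set G generates the ideal J_{n,k,d} ∩ ℤ[x_1,…,x_n,y_1,…,y_d]^{S_d} as an ideal of the invariant ring ℤ[x_1,…,x_n,y_1,…,y_d]^{S_d}; moreover, the set C_{n,k,d} descends to a ℤ-module basis of ℤ[x_1,…,x_n,y_1,…,y_d]^{S_d}/(J_{n,k,d} ∩ ℤ[x_1,…,x_n,y_1,…,y_d]^{S_d}). -/

import Mathlib

open MvPolynomial

set_option synthInstance.maxHeartbeats 1000000
set_option maxHeartbeats 4000000

/-- The elementary symmetric polynomial `e_r` in the x-variables, over `ℤ`. -/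
noncomputable def eXZ (n d r : ℕ) : MvPolynomial (Fin n ⊕ Fin d) ℤ :=
  rename Sum.inl (esymm (Fin n) ℤ r)

/-- The complete homogeneous symmetric polynomial `h_r` in the y-variables, over `ℤ`. -/
noncomputable def hYZ (n d r : ℕ) : MvPolynomial (Fin n ⊕ Fin d) ℤ :=
  rename Sum.inr (hsymm (Fin d) ℤ r)

/-- The elementary symmetric polynomial `e_r` in the y-variables, over `ℤ`. -/
noncomputable def eYZ (n d r : ℕ) : MvPolynomial (Fin n ⊕ Fin d) ℤ :=
  rename Sum.inr (esymm (Fin d) ℤ r)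

/-- `Σ_{a+b=r} (−1)^b e_a(x_1,…,x_n)·h_b(y_1,…,y_d)`, over `ℤ`. -/
noncomputable def genXYZ (n d r : ℕ) : MvPolynomial (Fin n ⊕ Fin d) ℤ :=
  ∑ j ∈ Finset.range (r + 1),
    (-1 : MvPolynomial (Fin n ⊕ Fin d) ℤ) ^ j * (eXZ n d (r - j) * hYZ n d j)

/-- `Σ_{j=0}^{d} (−1)^j x_i^{d−j} e_j(y_1,…,y_d)`, over `ℤ`. -/
noncomputable def genPowZ (n d : ℕ) (i : Fin n) : MvPolynomial (Fin n ⊕ Fin d) ℤ :=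
  ∑ j ∈ Finset.range (d + 1),
    (-1 : MvPolynomial (Fin n ⊕ Fin d) ℤ) ^ j * (X (Sum.inl i) ^ (d - j) * eYZ n d j)

/-- The set `G ⊆ ℤ[x_1,…,x_n,y_1,…,y_d]` of generators of the ideal `J_{n,k,d}`. -/
def GgensZ (n k d : ℕ) : Set (MvPolynomial (Fin n ⊕ Fin d) ℤ) :=
  {p | ∃ r, k - d < r ∧ p = hYZ n d r} ∪
  {p | ∃ r, n - d < r ∧ p = genXYZ n d r} ∪
  {p | ∃ i : Fin n, p = genPowZ n d i}

/-- The permutation of the variable index set `Fin n ⊕ Fin d` induced by a permutation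
of the y-indices. -/
def permY (n d : ℕ) (g : Equiv.Perm (Fin d)) : (Fin n ⊕ Fin d) ≃ (Fin n ⊕ Fin d) :=
  Equiv.sumCongr (Equiv.refl (Fin n)) g

/-- The subring of `S_d`-invariants of `ℤ[x_1,…,x_n,y_1,…,y_d]`, where `S_d` permutes
the variables `y_1,…,y_d` and fixes the x-variables. -/
noncomputable def invZ2 (n d : ℕ) : Subalgebra ℤ (MvPolynomial (Fin n ⊕ Fin d) ℤ) where
  carrier := {f | ∀ g : Equiv.Perm (Fin d), rename (⇑(permY n d g)) f = f}
  mul_mem' := fun ha hb g => by rw [map_mul, ha g, hb g]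
  add_mem' := fun ha hb g => by rw [map_add, ha g, hb g]
  one_mem' := fun g => by rw [map_one]
  zero_mem' := fun g => by rw [map_zero]
  algebraMap_mem' := fun r g => by rw [MvPolynomial.algebraMap_eq, rename_C]

/-- An `(n,d)`-staircase: a shuffle of the sequence `(0,1,…,d−1)` with `n−d` copies
of `d−1`, i.e. the values `0, 1, …, d−1` appear in this order at some increasing set of
`d` positions and every other entry equals `d−1`. -/
def IsStaircase (n d : ℕ) (s : Fin n → ℕ) : Prop :=
  ∃ φ : Fin d → Fin n, StrictMono φ ∧ (∀ t, s (φ t) = t) ∧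
    ∀ j : Fin n, (∀ t, j ≠ φ t) → s j = d - 1

/-- An `(n,d)`-substaircase sequence: componentwise at most some `(n,d)`-staircase. -/
def IsSubstaircase (n d : ℕ) (a : Fin n → ℕ) : Prop :=
  ∃ s, IsStaircase n d s ∧ ∀ j, a j ≤ s j

/-- Complete homogeneous symmetric polynomial indexed by an integer
(interpreted as zero for a negative index). -/
noncomputable def hsymmZidx (σ : Type*) [Fintype σ] [DecidableEq σ] (R : Type*)
    [CommSemiring R] (m : ℤ) : MvPolynomial σ R :=
  if 0 ≤ m then hsymm σ R m.toNat else 0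

/-- The Schur polynomial `s_λ` in the `d` variables `y_1,…,y_d` over `ℤ`, defined via the
Jacobi–Trudi determinant `det(h_{λ_i − i + j})_{1 ≤ i,j ≤ d}` (for `λ` a partition with at
most `d` parts, recorded as a weakly decreasing function `Fin d → ℕ`). -/
noncomputable def schurPoly (d : ℕ) (lam : Fin d → ℕ) : MvPolynomial (Fin d) ℤ :=
  (Matrix.of fun i j : Fin d =>
    hsymmZidx (Fin d) ℤ ((lam i : ℤ) - ((i : ℕ) : ℤ) + ((j : ℕ) : ℤ))).det

/-- The set `C_{n,k,d} ⊆ ℤ[x,y]^{S_d}` of products of substaircase monomials in the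
x-variables with Schur polynomials `s_λ(y_1,…,y_d)` for partitions `λ ⊆ (k−d)^d`. -/
def CsetZ (n k d : ℕ) : Set (MvPolynomial (Fin n ⊕ Fin d) ℤ) :=
  {p | ∃ a : Fin n → ℕ, IsSubstaircase n d a ∧
    ∃ lam : Fin d → ℕ, Antitone lam ∧ (∀ i, lam i ≤ k - d) ∧
      p = (∏ j, X (Sum.inl j) ^ a j) * rename Sum.inr (schurPoly d lam)}




section PS
variable {A : Type*} [CommRing A]

theorem ps_esymm {K : ℕ} (z : Fin K → A) :
    PowerSeries.mk (fun r => (-1 : A)^r * aeval z (esymm (Fin K) ℤ r)) =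
      ∏ i, (1 - PowerSeries.C (z i) * PowerSeries.X) := by
  have h1 : ∀ i, (1 - PowerSeries.C (z i) * PowerSeries.X : PowerSeries A) =
      1 + PowerSeries.monomial 1 (- z i) := by
    intro i
    ext m
    simp [PowerSeries.coeff_monomial, PowerSeries.coeff_X, sub_eq_add_neg]
  simp_rw [h1]
  rw [Finset.prod_one_add]
  ext r
  simp only [PowerSeries.prod_monomial, map_sum, PowerSeries.coeff_mk, esymm, PowerSeries.coeff_monomial, map_prod, aeval_X, Finset.mul_sum]
  rw [Finset.powersetCard_eq_filter, Finset.sum_filter]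
  apply Finset.sum_congr rfl
  intro t _
  by_cases h : t.card = r
  · simp [h, Finset.prod_neg]
  · simp [h, Ne.symm h]

theorem ps_hsymm {d : ℕ} (y : Fin d → A) :
    PowerSeries.mk (fun r => aeval y (hsymm (Fin d) ℤ r)) =
      ∏ i, PowerSeries.mk (fun m => y i ^ m) := by
  ext r
  rw [PowerSeries.coeff_prod]
  simp only [PowerSeries.coeff_mk, hsymm, map_sum]
  refine Finset.sum_bij' (fun s _ => Multiset.toFinsupp s.1)
    (fun l hl => ⟨Finsupp.toMultiset l, ?_⟩) ?_ ?_ ?_ ?_ ?_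
  · rw [Finset.mem_finsuppAntidiag] at hl
    rw [Finsupp.card_toMultiset, Finsupp.sum_fintype _ _ (by simp)]
    exact hl.1
  · intro s _
    rw [Finset.mem_finsuppAntidiag]
    refine ⟨?_, by simp⟩
    have h2 : (Multiset.card (s : Multiset (Fin d))) = r := s.2
    calc ∑ i, (Multiset.toFinsupp (s : Multiset (Fin d))) i = ∑ i, Multiset.count i (s : Multiset (Fin d)) := by simp
      _ = r := by rw [Multiset.sum_count_eq_card (by simp), h2]
  · intro l _; exact Finset.mem_univ _
  · intro s _; exact Subtype.ext (by simp)
  · intro l _; simp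
  · intro s _
    rw [Finset.prod_multiset_map_count, map_prod]
    simp only [map_pow, aeval_X, Multiset.toFinsupp_apply]
    apply Finset.prod_subset (Finset.subset_univ _)
    intro x _ hx
    rw [Multiset.mem_toFinset, ← Multiset.count_eq_zero] at hx
    rw [hx, pow_zero]

theorem ps_geom (c : A) : PowerSeries.mk (fun m => c ^ m) * (1 - PowerSeries.C c * PowerSeries.X) = 1 := by
  ext m
  rw [mul_sub, mul_one, ← mul_assoc, map_sub]
  rcases m with _ | m
  · simp
  · rw [PowerSeries.coeff_succ_mul_X]
    simp [PowerSeries.coeff_one, pow_succ]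

theorem ps_hE {d : ℕ} (y : Fin d → A) :
    PowerSeries.mk (fun r => aeval y (hsymm (Fin d) ℤ r)) *
    PowerSeries.mk (fun r => (-1 : A)^r * aeval y (esymm (Fin d) ℤ r)) = 1 := by
  rw [ps_hsymm, ps_esymm, ← Finset.prod_mul_distrib]
  simp [ps_geom]
end PS


section PS2
variable {A : Type*} [CommRing A]

theorem coeff_prod_deg {ι : Type*} (s : Finset ι) (z : ι → A) (r : ℕ) (hr : s.card < r) :
    PowerSeries.coeff r (∏ i ∈ s, (1 - PowerSeries.C (z i) * PowerSeries.X)) = 0 := by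
  have h : (∏ i ∈ s, (1 - PowerSeries.C (z i) * PowerSeries.X)) =
    ((∏ i ∈ s, (1 - Polynomial.C (z i) * Polynomial.X) : Polynomial A) : PowerSeries A) := by
    rw [← Polynomial.coeToPowerSeries.ringHom_apply, map_prod]
    simp
  rw [h, Polynomial.coeff_coe]
  apply Polynomial.coeff_eq_zero_of_natDegree_lt
  refine lt_of_le_of_lt (Polynomial.natDegree_prod_le _ _) (lt_of_le_of_lt ?_ hr)
  rw [Finset.card_eq_sum_ones]
  apply Finset.sum_le_sum
  intro i _
  compute_degree

theorem coeff_EH_zero {K d : ℕ} (z : Fin K → A) (y : Fin d → A) (φ : Fin d → Fin K)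
    (hφ : Function.Injective φ) (hz : ∀ j, z (φ j) = y j) (r : ℕ) (hr : K - d < r) :
    PowerSeries.coeff r ((∏ i, (1 - PowerSeries.C (z i) * PowerSeries.X)) *
      PowerSeries.mk (fun r => aeval y (hsymm (Fin d) ℤ r))) = 0 := by
  have h1 : ∏ i, (1 - PowerSeries.C (z i) * PowerSeries.X) =
     (∏ i, (1 - PowerSeries.C (y i) * PowerSeries.X)) *
      ∏ i ∈ (Finset.univ.image φ)ᶜ, (1 - PowerSeries.C (z i) * PowerSeries.X) := by
    rw [← Finset.prod_mul_prod_compl (Finset.univ.image φ), Finset.prod_image (by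
      intro a _ b _ h; exact hφ h)]
    simp [hz]
  have h2 := ps_hE y
  rw [ps_esymm] at h2
  rw [h1, mul_right_comm, mul_comm (∏ i, (1 - PowerSeries.C (y i) * PowerSeries.X)), h2, one_mul]
  apply coeff_prod_deg
  rw [Finset.card_compl, Finset.card_image_of_injective _ hφ]
  simpa using hr

/-- monic polynomial with given signed coefficients -/
noncomputable def fpoly (d : ℕ) (e : ℕ → A) : Polynomial A :=
  ∑ j ∈ Finset.range (d + 1), Polynomial.C ((-1) ^ j * e j) * Polynomial.X ^ (d - j)

theorem fpoly_map {B : Type*} [CommRing B] (g : A →+* B) (d : ℕ) (e : ℕ → A) :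
    (fpoly d e).map g = fpoly d (fun j => g (e j)) := by
  simp [fpoly, Polynomial.map_sum]

theorem fpoly_monic (d : ℕ) (e : ℕ → A) (h0 : e 0 = 1) : (fpoly d e).Monic := by
  rw [fpoly, Finset.sum_range_succ']
  simp only [h0, pow_zero, mul_one, map_one, one_mul, Nat.sub_zero]
  rw [add_comm]
  apply Polynomial.monic_X_pow_add
  refine lt_of_le_of_lt (Polynomial.degree_sum_le _ _) ?_
  rw [Finset.sup_lt_iff (by simp)]
  intro j hj
  rw [Finset.mem_range] at hj
  refine lt_of_le_of_lt (Polynomial.degree_C_mul_X_pow_le _ _) ?_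
  exact_mod_cast (by omega : d - (j+1) < d)

theorem fpoly_natDegree [Nontrivial A] (d : ℕ) (e : ℕ → A) (h0 : e 0 = 1) : (fpoly d e).natDegree = d := by
  rw [fpoly, Finset.sum_range_succ']
  simp only [h0, pow_zero, mul_one, map_one, one_mul, Nat.sub_zero]
  rw [add_comm]
  rw [Polynomial.natDegree_add_eq_left_of_degree_lt]
  · simp
  rw [Polynomial.degree_X_pow]
  refine lt_of_le_of_lt (Polynomial.degree_sum_le _ _) ?_
  rw [Finset.sup_lt_iff (by simp)]
  intro j hj
  rw [Finset.mem_range] at hj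
  refine lt_of_le_of_lt (Polynomial.degree_C_mul_X_pow_le _ _) ?_
  exact_mod_cast (by omega : d - (j+1) < d)

theorem reflect_prod (n : ℕ) (x : Fin n → A) :
    Polynomial.reflect n (∏ i, (1 - Polynomial.C (x i) * Polynomial.X)) = ∏ i, (Polynomial.X - Polynomial.C (x i)) := by
  induction n with
  | zero => simp
  | succ n ih =>
    rw [Fin.prod_univ_castSucc, Fin.prod_univ_castSucc, Polynomial.reflect_mul]
    · rw [ih]
      congr 1
      have := Polynomial.reflect_C_mul_X_pow 1 1 (c := x (Fin.last n))
      rw [pow_one] at this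
      rw [Polynomial.reflect_sub, this]
      simp
    · refine (Polynomial.natDegree_prod_le _ _).trans ?_
      refine (Finset.sum_le_sum (g := fun _ => 1) ?_).trans (by simp)
      intro i _
      compute_degree
    · compute_degree

theorem fpoly_dvd (n d : ℕ) (hdn : d ≤ n) (e h : ℕ → A) (x : Fin n → A) (hed : ∀ r, d < r → e r = 0)
    (hh : PowerSeries.mk h * PowerSeries.mk (fun r => (-1) ^ r * e r) = 1)
    (hv : ∀ r, n - d < r → PowerSeries.coeff r ((∏ i, (1 - PowerSeries.C (x i) * PowerSeries.X)) *
      PowerSeries.mk h) = 0) :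
    fpoly d e ∣ ∏ i, (Polynomial.X - Polynomial.C (x i)) := by
  set P : Polynomial A := ∏ i, (1 - Polynomial.C (x i) * Polynomial.X) with hP
  have hPc : (P : PowerSeries A) = ∏ i, (1 - PowerSeries.C (x i) * PowerSeries.X) := by
    rw [hP, ← Polynomial.coeToPowerSeries.ringHom_apply, map_prod]
    simp
  set F : Polynomial A := ∑ j ∈ Finset.range (d + 1), Polynomial.C ((-1) ^ j * e j) * Polynomial.X ^ j with hF
  have hFc : (F : PowerSeries A) = PowerSeries.mk (fun r => (-1) ^ r * e r) := by
    ext r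
    rw [Polynomial.coeff_coe, hF, Polynomial.finsetSum_coeff]
    simp only [Polynomial.coeff_C_mul_X_pow, PowerSeries.coeff_mk]
    rw [Finset.sum_ite_eq]
    split_ifs with h
    · rfl
    · rw [hed r (by simpa using h), mul_zero]
  set q := PowerSeries.trunc (n - d + 1) ((P : PowerSeries A) * PowerSeries.mk h) with hq
  have hqc : (q : PowerSeries A) = (P : PowerSeries A) * PowerSeries.mk h := by
    ext r
    rw [Polynomial.coeff_coe, hq, PowerSeries.coeff_trunc]
    split_ifs with hr
    · rfl
    · rw [hPc, hv r (by omega)]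
  have hmul : P = q * F := by
    apply Polynomial.coe_injective
    rw [Polynomial.coe_mul, hqc, hFc, mul_assoc, hh, mul_one]
  have hqd : q.natDegree ≤ n - d := by
    have := PowerSeries.natDegree_trunc_lt ((P : PowerSeries A) * PowerSeries.mk h) (n - d)
    exact Nat.lt_succ_iff.mp this
  have hFd : F.natDegree ≤ d := by
    apply Polynomial.natDegree_sum_le_of_forall_le
    intro j hj
    refine (Polynomial.natDegree_C_mul_X_pow_le _ _).trans ?_
    simpa [Nat.lt_succ_iff] using hj
  have hFr : Polynomial.reflect d F = fpoly d e := by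
    rw [hF, fpoly]
    have : ∀ s : Finset ℕ, ∀ g : ℕ → Polynomial A, Polynomial.reflect d (∑ j ∈ s, g j) = ∑ j ∈ s, Polynomial.reflect d (g j) := by
      intro s g
      induction s using Finset.induction_on with
      | empty => simp
      | insert a s ha ih => rw [Finset.sum_insert ha, Finset.sum_insert ha, Polynomial.reflect_add, ih]
    rw [this]
    apply Finset.sum_congr rfl
    intro j hj
    rw [Finset.mem_range] at hj
    rw [Polynomial.reflect_C_mul_X_pow, Polynomial.revAt_le (by omega)]
  rw [← reflect_prod, ← hP, hmul]
  have := Polynomial.reflect_mul q F hqd hFd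
  rw [Nat.sub_add_cancel hdn] at this
  rw [this, hFr]
  exact Dvd.intro_left _ rfl

end PS2


/-- Recursive description of substaircase sequences. -/
def SubSt (d : ℕ) : (n m : ℕ) → (Fin n → ℕ) → Prop
  | 0, m, _ => m = 0
  | n + 1, m, a => (a (Fin.last n) < m ∧ SubSt d n (m - 1) (Fin.init a)) ∨
      (m ≤ a (Fin.last n) ∧ a (Fin.last n) < d ∧ SubSt d n m (Fin.init a))

theorem SubSt.mono (d : ℕ) : ∀ (n m : ℕ) (a : Fin n → ℕ), m ≤ d → SubSt d n m a → SubSt d n (m - 1) a := by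
  intro n
  induction n with
  | zero => intro m a _ h; simp only [SubSt] at *; omega
  | succ n ih =>
    intro m a hm h
    rcases h with ⟨h1, h2⟩ | ⟨h1, h2, h3⟩
    · by_cases h : a (Fin.last n) < m - 1
      · exact Or.inl ⟨h, ih _ _ (by omega) h2⟩
      · exact Or.inr ⟨by omega, by omega, h2⟩
    · exact Or.inr ⟨by omega, h2, ih _ _ hm h3⟩

section SpanSub
namespace Polynomial

/-- span of substaircase monomials -/
def _root_.subSpan (B : Type) {Q : Type} [CommRing B] [CommRing Q] [Algebra B Q] (d n m : ℕ) (x : Fin n → Q) :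
    Submodule B Q := Submodule.span B {p | ∃ a, SubSt d n m a ∧ p = ∏ i, x i ^ a i}

theorem _root_.poly_mem_subSpan {B Q : Type} [CommRing B] [CommRing Q] [Algebra B Q] (d n m D : ℕ)
    (x : Fin (n+1) → Q) (r : B[X]) (hr : r.degree < D) (b : Fin n → ℕ)
    (hb : ∀ c, c < D → SubSt d (n+1) m (Fin.snoc b c)) :
    aeval (x (Fin.last n)) r * ∏ i, x (Fin.castSucc i) ^ b i ∈ subSpan B d (n+1) m x := by
  by_cases h0 : r = 0
  · simp [h0]
  have hr' : r.natDegree < D := (natDegree_lt_iff_degree_lt h0).mpr hr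
  rw [aeval_eq_sum_range' hr', Finset.sum_mul]
  apply Submodule.sum_mem
  intro c hc
  rw [smul_mul_assoc]
  apply Submodule.smul_mem
  apply Submodule.subset_span
  refine ⟨Fin.snoc b c, hb c (Finset.mem_range.mp hc), ?_⟩
  rw [Fin.prod_univ_castSucc]
  simp [mul_comm]

theorem _root_.dvd_mod_ann {Q : Type} [CommRing Q] (G F : Q[X]) (hG : G.Monic) (z gz : Q)
    (hgz : gz = G.eval z) (h : G ∣ F * (X - C z)) (I : Ideal Q) (hI : ∀ r, r * gz = 0 → r ∈ I) :
    G.map (Ideal.Quotient.mk I) ∣ F.map (Ideal.Quotient.mk I) := by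
  nontriviality Q
  have h1 : G ∣ C gz * F := by
    have h2 : G = (X - C z) * (G /ₘ (X - C z)) + C gz := by
      have := modByMonic_add_div G (X - C z)
      rw [modByMonic_X_sub_C_eq_C_eval, ← hgz, add_comm] at this
      exact this.symm
    have h3 : C gz * F = G * F - (F * (X - C z)) * (G /ₘ (X - C z)) := by
      linear_combination (-F) * h2
    rw [h3]
    exact dvd_sub (Dvd.intro _ rfl) (h.mul_right _)
  have h4 := modByMonic_add_div F G
  have h5 : C gz * (F %ₘ G) = 0 := by
    have h6 : G ∣ C gz * (F %ₘ G) := by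
      have : C gz * (F %ₘ G) = C gz * F - G * (C gz * (F /ₘ G)) := by
        linear_combination (C gz) * h4
      rw [this]
      exact dvd_sub h1 (Dvd.intro _ rfl)
    rw [← modByMonic_eq_zero_iff_dvd hG] at h6
    rw [← h6, eq_comm, modByMonic_eq_self_iff hG]
    refine lt_of_le_of_lt ?_ (degree_modByMonic_lt F hG)
    rw [← smul_eq_C_mul]
    exact degree_smul_le _ _
  have h7 : (F %ₘ G).map (Ideal.Quotient.mk I) = 0 := by
    ext i
    rw [coeff_map, coeff_zero, Ideal.Quotient.eq_zero_iff_mem]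
    apply hI
    have := congrArg (fun p => coeff p i) h5
    simpa [mul_comm] using this
  rw [← h4, Polynomial.map_add, h7, zero_add, Polynomial.map_mul]
  exact Dvd.intro _ rfl

theorem _root_.span_sub (d n : ℕ) : ∀ (B Q : Type) [CommRing B] [CommRing Q] [Algebra B Q] (x : Fin n → Q)
    (g u : B[X]) (m e : ℕ), g.Monic → u.Monic → g.natDegree = m → u.natDegree = e → m + e = d →
    (∀ i, aeval (x i) (u * g) = 0) →
    g.map (algebraMap B Q) ∣ ∏ i, (X - C (x i)) →
    Algebra.adjoin B (Set.range x) = ⊤ → subSpan B d n m x = ⊤ := by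
  induction n with
  | zero =>
    intro B Q _ _ _ x g u m e hg hu hgm hue hmd hx hdvd hadj
    rcases subsingleton_or_nontrivial Q with hQ | hQ
    · rw [eq_top_iff]; intro q _; rw [Subsingleton.elim q 0]; exact Submodule.zero_mem _
    have : Nontrivial B := (algebraMap B Q).domain_nontrivial
    rw [eq_top_iff]
    intro q _
    have hm : m = 0 := by
      rw [Finset.univ_eq_empty, Finset.prod_empty] at hdvd
      have h1 := (hg.map (algebraMap B Q)).eq_one_of_isUnit (isUnit_of_dvd_one hdvd)
      have h2 := hg.natDegree_map (algebraMap B Q)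
      rw [h1, natDegree_one] at h2
      omega
    subst hm
    have hq : q ∈ Algebra.adjoin B (Set.range x) := by rw [hadj]; trivial
    have : Set.range x = ∅ := by simp
    rw [this, Algebra.adjoin_empty, Algebra.mem_bot] at hq
    obtain ⟨b, rfl⟩ := hq
    rw [Algebra.algebraMap_eq_smul_one]
    apply Submodule.smul_mem
    apply Submodule.subset_span
    exact ⟨fun _ => 0, by simp [SubSt], by simp⟩
  | succ n ih =>
    intro B Q _ _ _ x g u m e hg hu hgm hue hmd hx hdvd hadj
    rcases subsingleton_or_nontrivial Q with hQ | hQ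
    · rw [eq_top_iff]; intro q _; rw [Subsingleton.elim q 0]; exact Submodule.zero_mem _
    have hBn : Nontrivial B := (algebraMap B Q).domain_nontrivial
    set z := x (Fin.last n) with hz
    -- the step
    have step : ∀ (I : Ideal Q) (g1 u1 : B[X][X]) (m1 e1 : ℕ), g1.Monic → u1.Monic →
        g1.natDegree = m1 → u1.natDegree = e1 → m1 + e1 = d →
        (∀ i : Fin n, ((u1 * g1).map ((Ideal.Quotient.mk I).comp (aeval z : B[X] →ₐ[B] Q).toRingHom)).eval
          (Ideal.Quotient.mk I (x i.castSucc)) = 0) →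
        (g1.map ((Ideal.Quotient.mk I).comp (aeval z : B[X] →ₐ[B] Q).toRingHom) ∣
          ∏ i : Fin n, (X - C (Ideal.Quotient.mk I (x i.castSucc)))) →
        ∀ q : Q, ∃ (N : ℕ) (p : Fin N → B[X]) (b : Fin N → Fin n → ℕ), (∀ j, SubSt d n m1 (b j)) ∧
          q - ∑ j, aeval z (p j) * ∏ i, x (Fin.castSucc i) ^ b j i ∈ I := by
      intro I g1 u1 m1 e1 hg1 hu1 hgm1 hue1 hmd1 hx1 hdvd1 q
      let φ : B[X] →+* Q ⧸ I := (Ideal.Quotient.mk I).comp (aeval z : B[X] →ₐ[B] Q).toRingHom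
      let _ : Algebra B[X] (Q ⧸ I) := φ.toAlgebra
      have hφ : algebraMap B[X] (Q ⧸ I) = φ := rfl
      have hadj1 : Algebra.adjoin B[X] (Set.range fun i : Fin n => Ideal.Quotient.mk I (x i.castSucc)) = ⊤ := by
        rw [eq_top_iff]
        intro q' _
        obtain ⟨q, rfl⟩ := Ideal.Quotient.mk_surjective q'
        have hq : q ∈ Algebra.adjoin B (Set.range x) := by rw [hadj]; trivial
        induction hq using Algebra.adjoin_induction with
        | mem y hy =>
          obtain ⟨i, rfl⟩ := hy
          rcases Fin.eq_castSucc_or_eq_last i with ⟨j, rfl⟩ | rfl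
          · exact Algebra.subset_adjoin ⟨j, rfl⟩
          · have : Ideal.Quotient.mk I (x (Fin.last n)) = algebraMap B[X] (Q ⧸ I) X := by
              rw [hφ]; simp [φ, hz]
            rw [this]
            exact Subalgebra.algebraMap_mem _ _
        | algebraMap b =>
          have : Ideal.Quotient.mk I (algebraMap B Q b) = algebraMap B[X] (Q ⧸ I) (C b) := by
              rw [hφ]; simp [φ]
          rw [this]
          exact Subalgebra.algebraMap_mem _ _
        | add a b _ _ ha hb => rw [map_add]; exact Subalgebra.add_mem _ (ha trivial) (hb trivial)
        | mul a b _ _ ha hb => rw [map_mul]; exact Subalgebra.mul_mem _ (ha trivial) (hb trivial)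
      have := ih B[X] (Q ⧸ I) (fun i => Ideal.Quotient.mk I (x i.castSucc)) g1 u1 m1 e1 hg1 hu1 hgm1 hue1 hmd1
        (by
          intro i
          rw [aeval_def, ← eval_map]
          exact hx1 i) hdvd1 hadj1
      have hq : Ideal.Quotient.mk I q ∈ subSpan B[X] d n m1 (fun i => Ideal.Quotient.mk I (x i.castSucc)) := by
        rw [this]; trivial
      rw [subSpan, Submodule.mem_span_set'] at hq
      obtain ⟨N, p, v, hv⟩ := hq
      choose b hb hvb using fun j => (v j).2
      refine ⟨N, p, b, hb, ?_⟩
      rw [← Ideal.Quotient.eq_zero_iff_mem, map_sub, sub_eq_zero, ← hv, map_sum]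
      apply Finset.sum_congr rfl
      intro j _
      rw [hvb, Algebra.smul_def, hφ]
      simp [φ]
    set gz := aeval z g with hgz
    have hzg : gz = (g.map (algebraMap B Q)).eval z := by rw [hgz, aeval_def, eval_map]
    have hdvd' : g.map (algebraMap B Q) ∣ (∏ i : Fin n, (X - C (x i.castSucc))) * (X - C z) := by
      rw [Fin.prod_univ_castSucc] at hdvd
      exact hdvd
    have hcomp : ∀ (I : Ideal Q) (w : B[X]), (w.map C).map ((Ideal.Quotient.mk I).comp (aeval z : B[X] →ₐ[B] Q).toRingHom) =
        (w.map (algebraMap B Q)).map (Ideal.Quotient.mk I) := by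
      intro I w
      rw [Polynomial.map_map, Polynomial.map_map]
      congr 1
      ext b
      simp
    have hX : ∀ (I : Ideal Q), ((Ideal.Quotient.mk I).comp (aeval z : B[X] →ₐ[B] Q).toRingHom) X = Ideal.Quotient.mk I z := by
      intro I; simp
    have hxi : ∀ (I : Ideal Q) (i : Fin n), ((u.map (algebraMap B Q)).map (Ideal.Quotient.mk I)).eval (Ideal.Quotient.mk I (x i.castSucc)) *
       ((g.map (algebraMap B Q)).map (Ideal.Quotient.mk I)).eval (Ideal.Quotient.mk I (x i.castSucc)) = 0 := by
      intro I i
      rw [eval_map_apply, eval_map_apply, ← map_mul, ← eval_mul, ← Polynomial.map_mul, eval_map, ← aeval_def, hx, map_zero]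
    have P1 : ∀ q : Q, ∃ s ∈ subSpan B d (n+1) m x, ∃ q', q = s + gz * q' := by
      intro q
      by_cases hm : m = 0
      · have : g = 1 := hg.natDegree_eq_zero.mp (by omega)
        refine ⟨0, Submodule.zero_mem _, q, ?_⟩
        rw [hgz, this]; simp
      · have hdiv : (X - C X) * (g.map C /ₘ (X - C (X : B[X]))) = g.map C - C g := by
          have := modByMonic_add_div (g.map C) (X - C (X : B[X]))
          rw [modByMonic_X_sub_C_eq_C_eval, eval_map, eval₂_C_X] at this
          linear_combination this
        have hdeg : (g.map (C : B →+* B[X])).natDegree = m := by rw [hg.natDegree_map, hgm]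
        have hmon : (g.map C /ₘ (X - C (X : B[X]))).Monic := by
          rw [Monic, leadingCoeff_divByMonic_of_monic (monic_X_sub_C _)]
          · exact hg.map _
          · rw [degree_X_sub_C, degree_eq_natDegree (hg.map _).ne_zero, hdeg]
            exact_mod_cast (by omega : 1 ≤ m)
        obtain ⟨N, p, b, hb, hq⟩ := step (Ideal.span {gz}) (g.map C /ₘ (X - C (X : B[X]))) (u.map C * (X - C X)) (m - 1) (e + 1)
          hmon ((hu.map _).mul (monic_X_sub_C _))
          (by rw [natDegree_divByMonic _ (monic_X_sub_C _), hdeg, natDegree_X_sub_C])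
          (by rw [(hu.map _).natDegree_mul (monic_X_sub_C _), hu.natDegree_map, natDegree_X_sub_C, hue]) (by omega)
          (by
            intro i
            rw [mul_assoc, hdiv, Polynomial.map_mul, eval_mul, Polynomial.map_sub, hcomp, hcomp, eval_sub, mul_sub, hxi]
            rw [Polynomial.map_C]
            simp only [RingHom.comp_apply, AlgHom.toRingHom_eq_coe, RingHom.coe_coe, ← hgz, eval_C]
            rw [Ideal.Quotient.eq_zero_iff_mem.mpr (Ideal.mem_span_singleton_self _)]
            simp)
          (by
            have h1 := _root_.map_dvd (mapRingHom (Ideal.Quotient.mk (Ideal.span {gz}))) hdvd'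
            have h2 := congrArg (Polynomial.map ((Ideal.Quotient.mk (Ideal.span {gz})).comp (aeval z : B[X] →ₐ[B] Q).toRingHom)) hdiv
            rw [Polynomial.map_mul, Polynomial.map_sub, Polynomial.map_sub, hcomp, Polynomial.map_C, Polynomial.map_C, Polynomial.map_X, hX] at h2
            have h3 : ((Ideal.Quotient.mk (Ideal.span {gz})).comp (aeval z : B[X] →ₐ[B] Q).toRingHom) g = 0 := by
              simp only [RingHom.comp_apply, AlgHom.toRingHom_eq_coe, RingHom.coe_coe, ← hgz]
              exact Ideal.Quotient.eq_zero_iff_mem.mpr (Ideal.mem_span_singleton_self _)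
            rw [h3, C_0, sub_zero] at h2
            simp only [coe_mapRingHom] at h1
            rw [← h2, Polynomial.map_mul, Polynomial.map_sub, Polynomial.map_X, Polynomial.map_C, mul_comm] at h1
            obtain ⟨w, hw⟩ := h1
            refine ⟨w, ?_⟩
            rw [Polynomial.map_prod] at hw
            simp only [Polynomial.map_sub, Polynomial.map_X, Polynomial.map_C] at hw
            apply (monic_X_sub_C (Ideal.Quotient.mk (Ideal.span {gz}) z)).isRegular.right
            show _ * _ = _ * _
            rw [hw]; ring) q
        refine ⟨∑ j, aeval z (p j %ₘ g) * ∏ i, x (Fin.castSucc i) ^ b j i, ?_, ?_⟩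
        · apply Submodule.sum_mem
          intro j _
          apply poly_mem_subSpan d n m m x
          · rw [← hgm, ← degree_eq_natDegree hg.ne_zero]
            exact degree_modByMonic_lt _ hg
          · intro c hc
            left
            simp only [Fin.snoc_last, Fin.init_snoc]
            exact ⟨hc, hb j⟩
        · obtain ⟨w, hw⟩ := Ideal.mem_span_singleton.mp hq
          refine ⟨w + ∑ j, aeval z (p j /ₘ g) * ∏ i, x (Fin.castSucc i) ^ b j i, ?_⟩
          rw [sub_eq_iff_eq_add] at hw
          rw [hw, mul_add, add_comm, add_left_comm, Finset.mul_sum, ← Finset.sum_add_distrib, add_comm, add_right_inj]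
          apply Finset.sum_congr rfl
          intro j _
          conv_lhs => rw [← modByMonic_add_div (p j) g, map_add, map_mul, ← hgz]
          ring
    have P2 : ∀ q : Q, gz * q ∈ subSpan B d (n+1) m x := by
      intro q
      set I : Ideal Q := Submodule.annihilator (Ideal.span {gz}) with hI
      have hImem : ∀ r, r ∈ I ↔ r * gz = 0 := by
        intro r
        rw [hI, Ideal.span, Submodule.mem_annihilator_span_singleton, smul_eq_mul]
      obtain ⟨N, p, b, hb, hq⟩ := step I (g.map C) (u.map C) m e (hg.map _) (hu.map _)
        (by rw [hg.natDegree_map, hgm]) (by rw [hu.natDegree_map, hue]) hmd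
        (by
          intro i
          rw [Polynomial.map_mul, eval_mul, hcomp, hcomp]
          exact hxi I i)
        (by
          rw [hcomp]
          have := dvd_mod_ann _ _ (hg.map (algebraMap B Q)) z gz hzg hdvd' I (fun r hr => (hImem r).mpr hr)
          rw [Polynomial.map_prod] at this
          simpa using this) q
      rw [hImem, sub_mul, sub_eq_zero] at hq
      rw [mul_comm, hq, Finset.sum_mul]
      apply Submodule.sum_mem
      intro j _
      have hug : gz * aeval z u = 0 := by
        have := hx (Fin.last n)
        rw [map_mul] at this
        rw [hgz, mul_comm]; exact this
      have : aeval z (p j) * (∏ i, x (Fin.castSucc i) ^ b j i) * gz =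
          aeval z (g * (p j %ₘ u)) * ∏ i, x (Fin.castSucc i) ^ b j i := by
        conv_lhs => rw [← modByMonic_add_div (p j) u, map_add, map_mul]
        rw [map_mul, ← hgz]
        linear_combination (aeval z (p j /ₘ u) * ∏ i, x (Fin.castSucc i) ^ b j i) * hug
      rw [this]
      apply poly_mem_subSpan d n m d x
      · rw [mul_comm, hg.degree_mul]
        have h1 : g.degree = m := by rw [← hgm, degree_eq_natDegree hg.ne_zero]
        have h2 : (p j %ₘ u).degree < e := by
          rw [← hue, ← degree_eq_natDegree hu.ne_zero]
          exact degree_modByMonic_lt _ hu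
        rw [h1, ← hmd]
        push_cast
        rw [add_comm]
        exact WithBot.add_lt_add_left (by simp) h2
      · intro c hc
        simp only [SubSt, Fin.snoc_last, Fin.init_snoc]
        by_cases h : c < m
        · exact Or.inl ⟨h, SubSt.mono d n m _ (by omega) (hb j)⟩
        · exact Or.inr ⟨by omega, hc, hb j⟩
    rw [eq_top_iff]
    intro q _
    obtain ⟨s, hs, q', rfl⟩ := P1 q
    exact Submodule.add_mem _ hs (P2 q')

end Polynomial
end SpanSub


theorem subSt_iff (d : ℕ) : ∀ (n m : ℕ) (a : Fin n → ℕ), m ≤ d → (SubSt d n m a ↔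
    (∀ j, a j < d) ∧ ∃ φ : Fin m → Fin n, StrictMono φ ∧ ∀ t, a (φ t) ≤ t) := by
  intro n
  induction n with
  | zero =>
    intro m a hm
    simp only [SubSt]
    constructor
    · rintro rfl
      exact ⟨fun j => j.elim0, fun t => t.elim0, fun t => t.elim0, fun t => t.elim0⟩
    · rintro ⟨_, φ, _⟩
      rcases m with _ | m
      · rfl
      · exact (φ 0).elim0
  | succ n ih =>
    intro m a hm
    constructor
    · rintro (⟨h1, h2⟩ | ⟨h1, h2, h3⟩)
      · obtain ⟨m, rfl⟩ : ∃ m', m = m' + 1 := ⟨m - 1, by omega⟩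
        rw [Nat.add_sub_cancel] at h2
        obtain ⟨h3, φ, hφ, h4⟩ := (ih _ _ (by omega)).mp h2
        refine ⟨?_, Fin.snoc (fun t => (φ t).castSucc) (Fin.last n), ?_, ?_⟩
        · intro j
          rcases Fin.eq_castSucc_or_eq_last j with ⟨j, rfl⟩ | rfl
          · exact h3 j
          · omega
        · intro s t hst
          rcases Fin.eq_castSucc_or_eq_last s with ⟨s, rfl⟩ | rfl
          · rcases Fin.eq_castSucc_or_eq_last t with ⟨t, rfl⟩ | rfl
            · simp only [Fin.snoc_castSucc]
              exact Fin.castSucc_lt_castSucc_iff.mpr (hφ (Fin.castSucc_lt_castSucc_iff.mp hst))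
            · simp [Fin.castSucc_lt_last]
          · exact absurd hst (not_lt.mpr (Fin.le_last t))
        · intro t
          rcases Fin.eq_castSucc_or_eq_last t with ⟨t, rfl⟩ | rfl
          · simpa [Fin.init] using h4 t
          · simp; omega
      · obtain ⟨h3, φ, hφ, h4⟩ := (ih _ _ hm).mp h3
        refine ⟨?_, fun t => (φ t).castSucc, ?_, ?_⟩
        · intro j
          rcases Fin.eq_castSucc_or_eq_last j with ⟨j, rfl⟩ | rfl
          · exact h3 j
          · omega
        · intro s t hst
          exact Fin.castSucc_lt_castSucc_iff.mpr (hφ hst)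
        · exact h4
    · rintro ⟨h1, φ, hφ, h2⟩
      by_cases hl : a (Fin.last n) < m
      · obtain ⟨m, rfl⟩ : ∃ m', m = m' + 1 := ⟨m - 1, by omega⟩
        refine Or.inl ⟨hl, ?_⟩
        simp only [Nat.add_sub_cancel]
        rw [ih _ _ (by omega)]
        have hlt : ∀ t : Fin m, φ t.castSucc < Fin.last n := fun t =>
          lt_of_lt_of_le (hφ (Fin.castSucc_lt_last t)) (Fin.le_last _)
        refine ⟨fun j => h1 _, fun t => (φ t.castSucc).castLT (hlt t), ?_, ?_⟩
        · intro s t hst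
          exact hφ (Fin.castSucc_lt_castSucc_iff.mpr hst)
        · intro t
          exact h2 t.castSucc
      · refine Or.inr ⟨by omega, h1 _, ?_⟩
        rw [ih _ _ hm]
        have hlt : ∀ t : Fin m, φ t < Fin.last n := fun t => by
          refine lt_of_le_of_ne (Fin.le_last _) ?_
          intro h
          have := h2 t
          rw [h] at this
          omega
        refine ⟨fun j => h1 _, fun t => (φ t).castLT (hlt t), ?_, ?_⟩
        · intro s t hst
          exact hφ hst
        · intro t
          exact h2 t

theorem isSubstaircase_iff (n d : ℕ) (hd : 1 ≤ d) (a : Fin n → ℕ) :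
    IsSubstaircase n d a ↔ SubSt d n d a := by
  rw [subSt_iff _ _ _ _ le_rfl]
  constructor
  · rintro ⟨s, ⟨φ, hφ, h1, h2⟩, h3⟩
    refine ⟨?_, φ, hφ, fun t => (h3 _).trans (h1 t).le⟩
    intro j
    refine lt_of_le_of_lt (h3 j) ?_
    by_cases h : ∃ t, j = φ t
    · obtain ⟨t, rfl⟩ := h
      rw [h1]; exact t.2
    · push Not at h
      rw [h2 j h]; omega
  · rintro ⟨h1, φ, hφ, h2⟩
    classical
    refine ⟨fun j => if h : ∃ t, j = φ t then (h.choose : ℕ) else d - 1, ⟨φ, hφ, ?_, ?_⟩, ?_⟩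
    · intro t
      have h : ∃ t', φ t = φ t' := ⟨t, rfl⟩
      beta_reduce
      rw [dif_pos h]
      rw [← hφ.injective h.choose_spec]
    · intro j hj
      beta_reduce
      rw [dif_neg (by rintro ⟨t, ht⟩; exact hj t ht)]
    · intro j
      dsimp only
      split_ifs with h
      · have := h.choose_spec
        conv_lhs => rw [this]
        exact h2 _
      · have := h1 j
        omega

theorem subSt_inj (d : ℕ) (hd : 1 ≤ d) : ∀ (n m : ℕ) (G : Finset (Fin d)), G.card = m →
    ∃ F : (Fin n → ℕ) → (Fin n → Fin d), (∀ a, SubSt d n m a → ∀ g ∈ G, ∃ i, F a i = g) ∧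
      Set.InjOn F {a | SubSt d n m a} := by
  intro n
  induction n with
  | zero =>
    intro m G hG
    refine ⟨fun _ t => t.elim0, ?_, ?_⟩
    · intro a ha g hg
      simp only [SubSt] at ha
      subst ha
      rw [Finset.card_eq_zero] at hG
      simp [hG] at hg
    · intro a _ b _ _
      exact Subsingleton.elim _ _
  | succ n ih =>
    intro m G hG
    have hmd : m ≤ d := by rw [← hG]; simpa using Finset.card_le_univ G
    obtain ⟨e⟩ : Nonempty ({c : Fin d // (c : ℕ) < m} ≃ {c : Fin d // c ∈ G}) := by
      apply Fintype.card_eq.mp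
      rw [Fintype.card_subtype, Fintype.card_coe, hG, Fin.card_filter_val_lt]
      simp [hmd]
    set σ := e.extendSubtype with hσ
    have hσ1 : ∀ c : Fin d, (c : ℕ) < m → σ c ∈ G := fun c hc => e.extendSubtype_mem c hc
    have hσ2 : ∀ c : Fin d, ¬ (c : ℕ) < m → σ c ∉ G := fun c hc => e.extendSubtype_not_mem c hc
    have hF : ∀ c : Fin d, ∃ F : (Fin n → ℕ) → (Fin n → Fin d),
      (∀ a, SubSt d n (if (c : ℕ) < m then m - 1 else m) a →
        ∀ g ∈ (if (c : ℕ) < m then G.erase (σ c) else G), ∃ i, F a i = g) ∧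
      Set.InjOn F {a | SubSt d n (if (c : ℕ) < m then m - 1 else m) a} := by
      intro c
      apply ih
      split_ifs with h
      · rw [Finset.card_erase_of_mem (hσ1 c h), hG]
      · exact hG
    choose F hF1 hF2 using hF
    have hS : ∀ a, SubSt d (n+1) m a → ∃ h : a (Fin.last n) < d,
        SubSt d n (if ((⟨a (Fin.last n), h⟩ : Fin d) : ℕ) < m then m - 1 else m) (Fin.init a) := by
      rintro a (⟨h1, h2⟩ | ⟨h1, h2, h3⟩)
      · refine ⟨by omega, ?_⟩
        simpa [h1] using h2
      · refine ⟨h2, ?_⟩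
        simpa [not_lt.mpr h1] using h3
    refine ⟨fun a => if h : a (Fin.last n) < d then Fin.snoc (F ⟨_, h⟩ (Fin.init a)) (σ ⟨_, h⟩) else fun _ => ⟨0, hd⟩, ?_, ?_⟩
    · intro a ha g hg
      obtain ⟨h, h2⟩ := hS a ha
      simp only [dif_pos h]
      by_cases hgs : g = σ ⟨_, h⟩
      · exact ⟨Fin.last n, by simp [hgs]⟩
      · obtain ⟨i, hi⟩ := hF1 _ _ h2 g (by
          split_ifs
          · exact Finset.mem_erase.mpr ⟨hgs, hg⟩
          · exact hg)
        exact ⟨i.castSucc, by simpa using hi⟩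
    · intro a ha b hb hab
      obtain ⟨h, h2⟩ := hS a ha
      obtain ⟨h', h2'⟩ := hS b hb
      simp only [dif_pos h, dif_pos h'] at hab
      have hl : a (Fin.last n) = b (Fin.last n) := by
        have := congrFun hab (Fin.last n)
        simp only [Fin.snoc_last] at this
        have := σ.injective this
        simpa using this
      have hi := congrArg Fin.init hab
      simp only [Fin.init_snoc] at hi
      have hc : (⟨a (Fin.last n), h⟩ : Fin d) = ⟨b (Fin.last n), h'⟩ := Fin.ext hl
      rw [← hc] at hi h2'
      have hinit := hF2 _ h2 h2' hi
      rw [← Fin.snoc_init_self a, ← Fin.snoc_init_self b, hinit, hl]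

theorem subSt_card (n d : ℕ) (hd : 1 ≤ d) [Finite {a : Fin n → ℕ // SubSt d n d a}] :
    Nat.card {a : Fin n → ℕ // SubSt d n d a} ≤ Nat.card {x : Fin n → Fin d // Function.Surjective x} := by
  obtain ⟨F, h1, h2⟩ := subSt_inj d hd n d Finset.univ (by simp)
  apply Nat.card_le_card_of_injective (fun a => ⟨F a.1, fun g => h1 a.1 a.2 g (Finset.mem_univ _)⟩)
  intro a b hab
  exact Subtype.ext (h2 a.2 b.2 (congrArg Subtype.val hab))

theorem subSt_finite (n d : ℕ) : Finite {a : Fin n → ℕ // SubSt d n d a} := by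
  apply Finite.of_injective (β := Fin n → Fin d) (fun a j => ⟨a.1 j, ((subSt_iff d n d a.1 le_rfl).mp a.2).1 j⟩)
  intro a b h
  ext j
  have := congrFun h j
  simpa using this


section Rec

theorem rec_reduce {R M : Type*} [CommRing R] [AddCommGroup M] [Module R M] (K : ℕ) (p : ℕ → R) (hp : p 0 = 1)
    (u : ℕ → M) (hu : ∀ m, ∑ a ∈ Finset.range (K + 1), ((-1) ^ a * p a) • u (m + (K - a)) = 0) (m : ℕ) :
    u m = ∑ i : Fin K, (Polynomial.X ^ m %ₘ fpoly K p).coeff i • u i := by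
  rcases subsingleton_or_nontrivial R with hR | hR
  · have := Module.subsingleton R M
    exact Subsingleton.elim _ _
  set L : Polynomial R →ₗ[R] M := (Polynomial.basisMonomials R).constr R u with hL
  have hLm : ∀ m, L (Polynomial.X ^ m) = u m := by
    intro m
    have := (Polynomial.basisMonomials R).constr_basis R u m
    simp only [Polynomial.coe_basisMonomials, Polynomial.monomial_one_right_eq_X_pow] at this
    exact this
  have hk : ∀ q, L (fpoly K p * q) = 0 := by
    intro q
    induction q using Polynomial.induction_on' with
    | add q r hq hr => rw [mul_add, map_add, hq, hr, add_zero]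
    | monomial j c =>
      rw [← Polynomial.C_mul_X_pow_eq_monomial, mul_left_comm, ← Polynomial.smul_eq_C_mul, map_smul]
      have : L (fpoly K p * Polynomial.X ^ j) = 0 := by
        rw [fpoly, Finset.sum_mul, map_sum, ← hu j]
        apply Finset.sum_congr rfl
        intro a _
        rw [mul_assoc, ← Polynomial.smul_eq_C_mul, map_smul, ← pow_add, hLm, add_comm]
      rw [this, smul_zero]
  have h1 := Polynomial.modByMonic_add_div (Polynomial.X ^ m) (fpoly K p)
  have hdeg : (Polynomial.X ^ m %ₘ fpoly K p).degree < K := by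
    have h2 := Polynomial.degree_modByMonic_lt (Polynomial.X ^ m) (fpoly_monic K p hp)
    rwa [Polynomial.degree_eq_natDegree (fpoly_monic K p hp).ne_zero, fpoly_natDegree K p hp] at h2
  have h3 : (Polynomial.X ^ m %ₘ fpoly K p) = ∑ i ∈ Finset.range K, Polynomial.monomial i ((Polynomial.X ^ m %ₘ fpoly K p).coeff i) := by
    by_cases h0 : Polynomial.X ^ m %ₘ fpoly K p = 0
    · rw [h0]; simp
    · exact Polynomial.as_sum_range' _ _ ((Polynomial.natDegree_lt_iff_degree_lt h0).mpr hdeg)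
  rw [← hLm m, ← h1, map_add, hk, add_zero]
  conv_lhs => rw [h3]
  rw [map_sum, Finset.sum_range]
  simp only [← Polynomial.C_mul_X_pow_eq_monomial, ← Polynomial.smul_eq_C_mul, map_smul, hLm, h1]

variable {A : Type*} [CommRing A]

/-- extension by zero to integer index -/
def hzf (h : ℕ → A) (m : ℤ) : A := if 0 ≤ m then h m.toNat else 0

theorem coeff_hzf (K : ℕ) (p h : ℕ → A) (hp : ∀ a, K < a → p a = 0) (M : ℕ) :
    ∑ a ∈ Finset.range (K + 1), p a * hzf h ((M : ℤ) - a) =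
      PowerSeries.coeff M (PowerSeries.mk p * PowerSeries.mk h) := by
  rw [PowerSeries.coeff_mul, Finset.Nat.sum_antidiagonal_eq_sum_range_succ_mk]
  simp only [PowerSeries.coeff_mk]
  have h1 : ∀ N, max K M ≤ N → ∑ a ∈ Finset.range (K + 1), p a * hzf h ((M : ℤ) - a) = ∑ a ∈ Finset.range (N + 1), p a * hzf h ((M : ℤ) - a) := by
    intro N hN
    apply Finset.sum_subset
    · intro a; simp only [Finset.mem_range]; omega
    · intro a _ ha
      rw [Finset.mem_range] at ha
      rw [hp a (by omega), zero_mul]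
  rw [h1 _ le_rfl]
  symm
  have h2 : ∀ a ∈ Finset.range (M + 1), p a * h (M - a) = p a * hzf h ((M : ℤ) - a) := by
    intro a ha
    rw [Finset.mem_range] at ha
    rw [hzf, if_pos (by omega)]
    congr 2
    omega
  rw [Finset.sum_congr rfl h2]
  apply Finset.sum_subset
  · intro a; simp only [Finset.mem_range]; omega
  · intro a _ ha
    rw [Finset.mem_range] at ha
    rw [hzf, if_neg (by omega), mul_zero]

/-- row of the Jacobi–Trudi matrix -/
def hrow (d : ℕ) (h : ℕ → A) (m : ℕ) : Fin d → A := fun j => hzf h ((m : ℤ) - ((d : ℤ) - 1) + (j : ℕ))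

/-- Jacobi–Trudi determinant in terms of beta numbers -/
def sdet (d : ℕ) (h : ℕ → A) (β : Fin d → ℕ) : A := (Matrix.of fun i => hrow d h (β i)).det

theorem hrow_rec {R : Type*} [CommRing R] [Algebra R A] (d K : ℕ) (hdK : d ≤ K) (p : ℕ → R) (h : ℕ → A) (hp : ∀ a, K < a → p a = 0)
    (hv : ∀ r, K - d < r → PowerSeries.coeff r (PowerSeries.mk (fun a => algebraMap R A ((-1) ^ a * p a)) * PowerSeries.mk h) = 0) (m : ℕ) :
    ∑ a ∈ Finset.range (K + 1), ((-1) ^ a * p a) • hrow d h (m + (K - a)) = 0 := by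
  ext j
  rw [Finset.sum_apply, Pi.zero_apply, ← hv (m + (K - d) + 1 + j) (by omega), ← coeff_hzf K _ _ (by intro a ha; simp [hp a ha])]
  apply Finset.sum_congr rfl
  intro a ha
  rw [Finset.mem_range] at ha
  rw [Pi.smul_apply, Algebra.smul_def, hrow]
  congr 2
  push_cast [Nat.cast_sub (by omega : a ≤ K), Nat.cast_sub hdK]
  ring

theorem sdet_delta (d : ℕ) (h : ℕ → A) (h0 : h 0 = 1) : sdet d h (fun i => d - 1 - i) = 1 := by
  rw [sdet, Matrix.det_of_isUpperTriangular]
  · apply Finset.prod_eq_one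
    intro i _
    simp only [Matrix.of_apply, hrow]
    have : ((d - 1 - (i : ℕ) : ℕ) : ℤ) - (d - 1) + (i : ℕ) = 0 := by
      have := i.2
      omega
    rw [this]
    simp [hzf, h0]
  · intro i j hij
    simp only [Matrix.of_apply, hrow, hzf]
    rw [if_neg]
    have := i.2
    have h2 : (j : ℕ) < i := hij
    omega

theorem fpoly_eval_root {d : ℕ} (y : Fin d → A) (l : Fin d) (m : ℕ) :
    ∑ a ∈ Finset.range (d + 1), ((-1) ^ a * aeval y (esymm (Fin d) ℤ a)) * y l ^ (m + (d - a)) = 0 := by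
  have h1 := Multiset.prod_X_sub_X_eq_sum_esymm (Multiset.map y Finset.univ.val)
  have h2 := congrArg (Polynomial.eval (y l)) h1
  simp only [Multiset.card_map, Finset.card_val, Finset.card_univ, Fintype.card_fin] at h2
  have h3 : Polynomial.eval (y l) (Multiset.map (fun t => Polynomial.X - Polynomial.C t) (Multiset.map y Finset.univ.val)).prod = 0 := by
    rw [Multiset.map_map, Finset.prod_map_val, Polynomial.eval_prod]
    exact Finset.prod_eq_zero (Finset.mem_univ l) (by simp)
  rw [h3, Polynomial.eval_finsetSum] at h2
  calc _ = y l ^ m * 0 := by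
        rw [h2, Finset.mul_sum]
        apply Finset.sum_congr rfl
        intro a _
        rw [aeval_esymm_eq_multiset_esymm]
        simp [pow_add]
        ring
    _ = 0 := mul_zero _

theorem esymm_zero_of_lt {d : ℕ} (y : Fin d → A) (a : ℕ) (ha : d < a) : aeval y (esymm (Fin d) ℤ a) = 0 := by
  rw [esymm, Finset.powersetCard_eq_empty.mpr (by simpa using ha)]
  simp

theorem bialternant {d : ℕ} (y : Fin d → A) (β : Fin d → ℕ) :
    (Matrix.of fun i j => y j ^ β i).det = sdet d (fun r => aeval y (hsymm (Fin d) ℤ r)) β *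
      (Matrix.of fun i j : Fin d => y j ^ (d - 1 - (i : ℕ))).det := by
  set h := (fun r => aeval y (hsymm (Fin d) ℤ r)) with hh
  set p := (fun r => aeval y (esymm (Fin d) ℤ r)) with hp
  have hp0 : p 0 = 1 := by simp [hp]
  have hps := ps_hE y
  have hH := rec_reduce d p hp0 (hrow d h) (hrow_rec d d le_rfl p h (esymm_zero_of_lt y) (by
    intro r hr
    rw [mul_comm]
    simp only [Algebra.algebraMap_self, RingHom.id_apply]
    simp only [hh, hp]
    rw [hps, PowerSeries.coeff_one, if_neg (by omega)]))
  have hV := rec_reduce d p hp0 (fun m => (fun j => y j ^ m : Fin d → A)) (by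
    intro m
    ext l
    rw [Finset.sum_apply]
    exact fpoly_eval_root y l m)
  set c : Matrix (Fin d) (Fin d) A := Matrix.of fun i l => (Polynomial.X ^ (β i) %ₘ fpoly d p).coeff (d - 1 - (l : ℕ)) with hc
  have key : ∀ u : ℕ → Fin d → A, (∀ m, u m = ∑ i : Fin d, (Polynomial.X ^ m %ₘ fpoly d p).coeff i • u i) →
     (Matrix.of fun i => u (β i)) = c * Matrix.of fun i : Fin d => u (d - 1 - (i : ℕ)) := by
    intro u hu
    ext i j
    rw [Matrix.of_apply, hu, Matrix.mul_apply, ← Equiv.sum_comp Fin.revPerm]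
    rw [Finset.sum_apply]
    apply Finset.sum_congr rfl
    intro l _
    simp only [hc, Matrix.of_apply, Pi.smul_apply, smul_eq_mul, Fin.revPerm_apply, Fin.val_rev]
    have : d - ((l : ℕ) + 1) = d - 1 - l := by omega
    rw [this]
  have k1 := congrArg Matrix.det (key _ hH)
  have k2 := congrArg Matrix.det (key _ hV)
  rw [Matrix.det_mul] at k1 k2
  have k3 := sdet_delta d h (by simp [hh])
  rw [sdet] at k3
  rw [k3, mul_one] at k1
  rw [sdet, k1]
  exact k2

end Rec


section Rho
variable {n d : ℕ}

theorem sdet_map {A B : Type*} [CommRing A] [CommRing B] (f : A →+* B) (d : ℕ) (h : ℕ → A) (β : Fin d → ℕ) :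
    f (sdet d h β) = sdet d (fun r => f (h r)) β := by
  rw [sdet, RingHom.map_det, sdet]
  congr 1
  ext i j
  simp only [RingHom.mapMatrix_apply, Matrix.map_apply, Matrix.of_apply, hrow, hzf]
  split_ifs <;> simp

theorem rename_symm_mem (p : MvPolynomial (Fin d) ℤ) (hp : p.IsSymmetric) :
    rename Sum.inr p ∈ invZ2 n d := by
  intro g
  rw [rename_rename]
  have : (⇑(permY n d g) ∘ Sum.inr) = Sum.inr ∘ g := by ext; simp [permY]
  rw [this, ← rename_rename, hp g]

theorem rename_inl_mem (p : MvPolynomial (Fin n) ℤ) :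
    rename Sum.inl p ∈ invZ2 n d := by
  intro g
  rw [rename_rename]
  congr 1

noncomputable def xR (n d : ℕ) (i : Fin n) : invZ2 n d := ⟨X (Sum.inl i), by
  have := rename_inl_mem (d := d) (X i : MvPolynomial (Fin n) ℤ)
  rwa [rename_X] at this⟩

noncomputable def hR (n d : ℕ) (r : ℕ) : invZ2 n d := ⟨hYZ n d r, rename_symm_mem _ (hsymm_isSymmetric _ _ _)⟩

noncomputable def eR (n d : ℕ) (r : ℕ) : invZ2 n d := ⟨eYZ n d r, rename_symm_mem _ (esymm_isSymmetric _ _ _)⟩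

noncomputable def yS (n d : ℕ) (j : Fin d) : MvPolynomial (Fin n ⊕ Fin d) ℤ := X (Sum.inr j)

theorem aeval_yS (p : MvPolynomial (Fin d) ℤ) : aeval (yS n d) p = rename Sum.inr p := by
  rw [rename_eq_aeval]; rfl

noncomputable def asym (n d : ℕ) : MvPolynomial (Fin n ⊕ Fin d) ℤ →ₗ[ℤ] MvPolynomial (Fin n ⊕ Fin d) ℤ where
  toFun p := ∑ σ : Equiv.Perm (Fin d), ((Equiv.Perm.sign σ : ℤ) : MvPolynomial (Fin n ⊕ Fin d) ℤ) *
    rename (permY n d σ) (p * ∏ i : Fin d, yS n d i ^ (d - 1 - (i : ℕ)))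
  map_add' p q := by
    simp only [add_mul, map_add, mul_add, Finset.sum_add_distrib]
  map_smul' c p := by
    simp only [Finset.smul_sum, smul_mul_assoc, RingHom.id_apply]
    apply Finset.sum_congr rfl
    intro σ _
    rw [map_smul, mul_smul_comm]

theorem asym_apply (p) : asym n d p = ∑ σ : Equiv.Perm (Fin d), ((Equiv.Perm.sign σ : ℤ) : MvPolynomial (Fin n ⊕ Fin d) ℤ) *
    rename (permY n d σ) (p * ∏ i : Fin d, yS n d i ^ (d - 1 - (i : ℕ))) := rfl

theorem asym_inv (q p : MvPolynomial (Fin n ⊕ Fin d) ℤ) (hq : q ∈ invZ2 n d) : asym n d (q * p) = q * asym n d p := by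
  rw [asym_apply, asym_apply, Finset.mul_sum]
  apply Finset.sum_congr rfl
  intro σ _
  rw [mul_assoc q, map_mul, hq σ]
  ring

noncomputable def Dlt (n d : ℕ) : MvPolynomial (Fin n ⊕ Fin d) ℤ := (Matrix.of fun i j : Fin d => yS n d j ^ (d - 1 - (i : ℕ))).det

theorem Dlt_ne : Dlt n d ≠ 0 := by
  have h : Dlt n d = ((Matrix.vandermonde (yS n d)).transpose.submatrix Fin.revPerm id).det := by
    rw [Dlt]
    congr 1
    ext i j
    simp only [Matrix.of_apply, Matrix.submatrix_apply, Matrix.transpose_apply, Matrix.vandermonde_apply, id, Fin.revPerm_apply, Fin.val_rev]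
    congr 2
    omega
  rw [h, Matrix.det_permute, Matrix.det_transpose]
  apply mul_ne_zero
  · exact_mod_cast (Units.ne_zero _)
  · rw [Matrix.det_vandermonde_ne_zero_iff]
    intro a b hab
    have := X_injective hab
    simpa using this

theorem asym_mon (a : Fin n → ℕ) (b : Fin d → ℕ) :
    asym n d ((∏ i, X (Sum.inl i) ^ a i) * ∏ j, yS n d j ^ b j) =
     Dlt n d * (((∏ i, xR n d i ^ a i) * sdet d (hR n d) (fun i => b i + (d - 1 - (i : ℕ))) : invZ2 n d) : MvPolynomial (Fin n ⊕ Fin d) ℤ) := by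
  have hb := bialternant (yS n d) (fun i => b i + (d - 1 - (i : ℕ)))
  have h1 : ((sdet d (hR n d) (fun i => b i + (d - 1 - (i : ℕ))) : invZ2 n d) : MvPolynomial (Fin n ⊕ Fin d) ℤ) =
     sdet d (fun r => aeval (yS n d) (hsymm (Fin d) ℤ r)) (fun i => b i + (d - 1 - (i : ℕ))) := by
    have := sdet_map (invZ2 n d).val.toRingHom d (hR n d) (fun i => b i + (d - 1 - (i : ℕ)))
    simp only [aeval_yS]
    exact this
  have h2 : ((∏ i, xR n d i ^ a i : invZ2 n d) : MvPolynomial (Fin n ⊕ Fin d) ℤ) = ∏ i, X (Sum.inl i) ^ a i := by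
    push_cast
    rfl
  rw [MulMemClass.coe_mul, h1, h2, mul_left_comm, mul_comm (Dlt n d), Dlt]
  refine Eq.trans ?_ (congrArg (fun t => (∏ i, X (Sum.inl i) ^ a i) * t) hb)
  beta_reduce
  rw [asym_apply, ← Matrix.det_transpose, Matrix.det_apply', Finset.mul_sum]
  apply Finset.sum_congr rfl
  intro σ _
  rw [mul_left_comm]
  congr 1
  rw [mul_assoc, ← Finset.prod_mul_distrib, map_mul, map_prod, map_prod]
  congr 1
  · apply Finset.prod_congr rfl
    intro i _
    simp [permY]
  · apply Finset.prod_congr rfl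
    intro i _
    simp [permY, yS, pow_add]

def Mset (n d : ℕ) : Set (invZ2 n d) := {r | ∃ (a : Fin n → ℕ) (β : Fin d → ℕ), r = (∏ i, xR n d i ^ a i) * sdet d (hR n d) β}

theorem exists_rho (p : MvPolynomial (Fin n ⊕ Fin d) ℤ) :
    ∃ r ∈ Submodule.span ℤ (Mset n d), asym n d p = Dlt n d * (r : MvPolynomial (Fin n ⊕ Fin d) ℤ) := by
  induction p using MvPolynomial.induction_on' with
  | monomial m c =>
    refine ⟨c • ((∏ i, xR n d i ^ m (Sum.inl i)) * sdet d (hR n d) (fun i => m (Sum.inr i) + (d - 1 - (i : ℕ)))),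
      Submodule.smul_mem _ _ (Submodule.subset_span ⟨_, _, rfl⟩), ?_⟩
    have h : (monomial m c : MvPolynomial (Fin n ⊕ Fin d) ℤ) = c • ((∏ i, X (Sum.inl i) ^ m (Sum.inl i)) * ∏ j, yS n d j ^ m (Sum.inr j)) := by
      rw [monomial_eq, Finsupp.prod_fintype _ _ (by simp), Fintype.prod_sum_type, smul_eq_C_mul]
      rfl
    rw [h, map_smul, asym_mon, SetLike.val_smul, mul_smul_comm]
  | add p q hp hq =>
    obtain ⟨r, hr, hr2⟩ := hp
    obtain ⟨s, hs, hs2⟩ := hq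
    refine ⟨r + s, Submodule.add_mem _ hr hs, ?_⟩
    rw [map_add, hr2, hs2]
    push_cast
    ring

theorem asym_one : asym n d 1 = Dlt n d := by
  have := asym_mon (n := n) (d := d) 0 0
  simp only [Pi.zero_apply, pow_zero, Finset.prod_const_one, mul_one, one_mul, zero_add] at this
  rw [this, sdet_delta]
  · simp
  · apply Subtype.ext
    simp [hR, hYZ]

theorem asym_of_mem (r : invZ2 n d) : asym n d (r : MvPolynomial (Fin n ⊕ Fin d) ℤ) = Dlt n d * (r : MvPolynomial (Fin n ⊕ Fin d) ℤ) := by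
  have := asym_inv (r : MvPolynomial (Fin n ⊕ Fin d) ℤ) 1 r.2
  rw [mul_one, asym_one] at this
  rw [this, mul_comm]

theorem Mspan_top : Submodule.span ℤ (Mset n d) = ⊤ := by
  rw [eq_top_iff]
  intro p _
  obtain ⟨r, hr, hr2⟩ := exists_rho (p : MvPolynomial (Fin n ⊕ Fin d) ℤ)
  rw [asym_of_mem] at hr2
  have := Subtype.ext (mul_left_cancel₀ Dlt_ne hr2)
  rwa [this]

theorem comap_eq (G : Set (MvPolynomial (Fin n ⊕ Fin d) ℤ)) (hG : ∀ g ∈ G, g ∈ invZ2 n d) :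
    Ideal.comap (invZ2 n d).val (Ideal.span G) = Ideal.span (Subtype.val ⁻¹' G : Set (invZ2 n d)) := by
  apply le_antisymm
  · have key : ∀ p ∈ Ideal.span G, ∀ s, ∃ r ∈ Ideal.span (Subtype.val ⁻¹' G : Set (invZ2 n d)),
        asym n d (s * p) = Dlt n d * (r : MvPolynomial (Fin n ⊕ Fin d) ℤ) := by
      intro p hp
      induction hp using Submodule.span_induction with
      | mem g hg =>
        intro s
        obtain ⟨r, -, hr2⟩ := exists_rho s
        refine ⟨⟨g, hG g hg⟩ * r, Ideal.mul_mem_right _ _ (Ideal.subset_span hg), ?_⟩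
        rw [mul_comm s, asym_inv _ _ (hG g hg), hr2]
        push_cast
        ring
      | zero => exact fun s => ⟨0, zero_mem _, by simp⟩
      | add p q _ _ hp hq =>
        intro s
        obtain ⟨r, hr, hr2⟩ := hp s
        obtain ⟨t, ht, ht2⟩ := hq s
        refine ⟨r + t, add_mem hr ht, ?_⟩
        rw [mul_add, map_add, hr2, ht2]
        push_cast
        ring
      | smul t p _ hp =>
        intro s
        obtain ⟨r, hr, hr2⟩ := hp (s * t)
        exact ⟨r, hr, by rw [smul_eq_mul, ← mul_assoc, hr2]⟩
    intro p hp
    obtain ⟨r, hr, hr2⟩ := key _ hp 1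
    rw [one_mul] at hr2
    have h3 := (asym_of_mem p).symm.trans hr2
    have := Subtype.ext (mul_left_cancel₀ Dlt_ne h3)
    rwa [this]
  · rw [Ideal.span_le]
    intro g hg
    exact Ideal.subset_span hg

theorem genXYZ_mem (r : ℕ) : genXYZ n d r ∈ invZ2 n d := by
  refine sum_mem fun j _ => mul_mem (pow_mem (neg_mem (one_mem _)) _) (mul_mem ?_ (hR n d j).2)
  exact rename_inl_mem _

theorem genPowZ_mem (i : Fin n) : genPowZ n d i ∈ invZ2 n d := by
  refine sum_mem fun j _ => mul_mem (pow_mem (neg_mem (one_mem _)) _) (mul_mem (pow_mem (xR n d i).2 _) (eR n d j).2)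

theorem Ggens_mem (k : ℕ) : ∀ g ∈ GgensZ n k d, g ∈ invZ2 n d := by
  rintro g ((⟨r, _, rfl⟩ | ⟨r, _, rfl⟩) | ⟨i, rfl⟩)
  · exact (hR n d r).2
  · exact genXYZ_mem r
  · exact genPowZ_mem i

end Rho


section Span1
variable {A : Type*} [CommRing A]

def BSet (d k : ℕ) : Set (Fin d → ℕ) := {β | StrictAnti β ∧ ∀ i, β i < k}

theorem sdet_sort (d k : ℕ) (h : ℕ → A) (r : Fin d → ℕ) (hr : ∀ i, r i < k) :
    sdet d h r ∈ Submodule.span ℤ (sdet d h '' BSet d k) := by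
  by_cases hi : Function.Injective r
  · set σ := Tuple.sort (OrderDual.toDual ∘ r) with hσ
    have hm := Tuple.monotone_sort (OrderDual.toDual ∘ r)
    have ha : Antitone (r ∘ σ) := fun i j hij => hm hij
    have hs : StrictAnti (r ∘ σ) := ha.strictAnti_of_injective (hi.comp σ.injective)
    have h1 : sdet d h (r ∘ σ) = (Equiv.Perm.sign σ : ℤ) • sdet d h r := by
      have := Matrix.det_permute σ (Matrix.of fun i => hrow d h (r i))
      rw [sdet, sdet, zsmul_eq_mul, ← this]
      rfl
    have h2 : sdet d h r = (Equiv.Perm.sign σ : ℤ) • sdet d h (r ∘ σ) := by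
      rw [h1, smul_smul]
      norm_cast
      rw [Int.units_mul_self]; simp
    rw [h2]
    exact Submodule.smul_mem _ _ (Submodule.subset_span ⟨_, ⟨hs, fun i => hr _⟩, rfl⟩)
  · have : sdet d h r = 0 := by
      rw [Function.Injective] at hi
      push Not at hi
      obtain ⟨i, j, hij, hne⟩ := hi
      rw [sdet]
      apply Matrix.det_zero_of_row_eq hne
      ext l
      simp [hij]
    rw [this]
    exact zero_mem _

theorem sdet_reduce (d k : ℕ) (h : ℕ → A) (c : ℕ → Fin k → ℤ) (hc : ∀ m, hrow d h m = ∑ i : Fin k, c m i • hrow d h i)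
    (β : Fin d → ℕ) : sdet d h β ∈ Submodule.span ℤ (sdet d h '' BSet d k) := by
  have h1 : sdet d h β = ∑ r : Fin d → Fin k, (∏ i, ((c (β i) (r i) : ℤ) : A)) * sdet d h (fun i => (r i : ℕ)) := by
    have e : ∀ γ : Fin d → ℕ, sdet d h γ = (Matrix.detRowAlternating (R := A) (n := Fin d)).toMultilinearMap (fun i => hrow d h (γ i)) := fun γ => rfl
    rw [e]
    have : (fun i => hrow d h (β i)) = fun i => ∑ l : Fin k, ((c (β i) l : ℤ) : A) • hrow d h l := by
      ext1 i
      rw [hc]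
      simp only [Int.cast_smul_eq_zsmul]
    rw [this, MultilinearMap.map_sum]
    apply Finset.sum_congr rfl
    intro r _
    rw [MultilinearMap.map_smul_univ, e, smul_eq_mul]
  rw [h1]
  refine sum_mem fun r _ => ?_
  have h2 : (∏ i, ((c (β i) (r i) : ℤ) : A)) = ((∏ i, (c (β i) (r i)) : ℤ) : A) := by push_cast; rfl
  rw [h2, ← zsmul_eq_mul]
  exact Submodule.smul_mem _ _ (sdet_sort d k h _ fun i => (r i).2)

end Span1

section Span2
variable {n d : ℕ} {A : Type*} [CommRing A]

theorem aeval_yS_int (p : MvPolynomial (Fin d) ℤ) :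
    @aeval ℤ (MvPolynomial (Fin n ⊕ Fin d) ℤ) (Fin d) _ _ (Ring.toIntAlgebra _) (yS n d) p = rename Sum.inr p := by
  have h : ∀ (i1 i2 : Algebra ℤ (MvPolynomial (Fin n ⊕ Fin d) ℤ)), @aeval ℤ (MvPolynomial (Fin n ⊕ Fin d) ℤ) (Fin d) _ _ i1 (yS n d) p = @aeval ℤ (MvPolynomial (Fin n ⊕ Fin d) ℤ) (Fin d) _ _ i2 (yS n d) p := by
    intro i1 i2
    rw [Subsingleton.elim i1 i2]
  rw [← aeval_yS]
  exact h _ _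

theorem aeval_xR (θ : invZ2 n d →+* A) (p : MvPolynomial (Fin n) ℤ) :
    aeval (fun i => θ (xR n d i)) p = θ ⟨rename Sum.inl p, rename_inl_mem p⟩ := by
  induction p using MvPolynomial.induction_on with
  | C a =>
    rw [aeval_C]
    have : (⟨rename Sum.inl (C a), rename_inl_mem (C a)⟩ : invZ2 n d) = algebraMap ℤ _ a := by
      apply Subtype.ext
      simp
    rw [this]
    simp
  | add p q hp hq =>
    rw [map_add, hp, hq, ← map_add]
    congr 1
    apply Subtype.ext
    simp
  | mul_X p i hp =>
    rw [map_mul, hp, aeval_X, ← map_mul]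
    congr 1
    apply Subtype.ext
    simp [xR]

theorem coeff_genXY (θ : invZ2 n d →+* A) (r : ℕ) :
    PowerSeries.coeff r ((∏ i, (1 - PowerSeries.C (θ (xR n d i)) * PowerSeries.X)) *
      PowerSeries.mk (fun r => θ (hR n d r))) = (-1) ^ r * θ ⟨genXYZ n d r, genXYZ_mem r⟩ := by
  rw [← ps_esymm (fun i => θ (xR n d i)), mul_comm, PowerSeries.coeff_mul, Finset.Nat.sum_antidiagonal_eq_sum_range_succ_mk]
  have : (⟨genXYZ n d r, genXYZ_mem r⟩ : invZ2 n d) = ∑ j ∈ Finset.range (r + 1), (-1) ^ j *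
     ((⟨rename Sum.inl (esymm (Fin n) ℤ (r - j)), rename_inl_mem _⟩ : invZ2 n d) * hR n d j) := by
    apply Subtype.ext
    push_cast
    rfl
  rw [this, map_sum, Finset.mul_sum]
  apply Finset.sum_congr rfl
  intro j hj
  rw [Finset.mem_range] at hj
  simp only [PowerSeries.coeff_mk, map_mul, map_pow, map_neg, map_one]
  rw [aeval_xR]
  obtain ⟨s, rfl⟩ := Nat.exists_eq_add_of_le (by omega : j ≤ r)
  rw [Nat.add_sub_cancel_left, pow_add]
  have : ((-1 : A) ^ j) * (-1) ^ j = 1 := by rw [← mul_pow]; simp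
  linear_combination (-θ (hR n d j) * (-1) ^ s * θ ⟨rename Sum.inl (esymm (Fin n) ℤ s), rename_inl_mem _⟩) * this

theorem hE_R (θ : invZ2 n d →+* A) : PowerSeries.mk (fun r => θ (hR n d r)) * PowerSeries.mk (fun r => (-1) ^ r * θ (eR n d r)) = 1 := by
  have h1 : PowerSeries.mk (hR n d) * PowerSeries.mk (fun r => (-1) ^ r * (eR n d r)) = 1 := by
    apply PowerSeries.ext
    intro r
    have := congrArg (PowerSeries.coeff r) (ps_hE (yS n d))
    simp only [PowerSeries.coeff_mul, PowerSeries.coeff_mk, aeval_yS_int, PowerSeries.coeff_one] at this ⊢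
    refine Subtype.ext (Eq.trans ?_ (this.trans ?_))
    · push_cast
      rfl
    · split_ifs <;> simp
  have h2 := congrArg (PowerSeries.map θ) h1
  rw [map_mul, map_one] at h2
  rw [← h2]
  congr 1
  ext r
  simp

theorem genPow_eval (θ : invZ2 n d →+* A) (i : Fin n) :
    θ ⟨genPowZ n d i, genPowZ_mem i⟩ = Polynomial.eval (θ (xR n d i)) (fpoly d (fun r => θ (eR n d r))) := by
  have : (⟨genPowZ n d i, genPowZ_mem i⟩ : invZ2 n d) = ∑ j ∈ Finset.range (d + 1), (-1) ^ j *
     (xR n d i ^ (d - j) * eR n d j) := by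
    apply Subtype.ext
    push_cast
    rfl
  rw [this, fpoly, Polynomial.eval_finsetSum, map_sum]
  apply Finset.sum_congr rfl
  intro j _
  simp
  ring

noncomputable def Bs (n d : ℕ) : Subalgebra ℤ (invZ2 n d) := ((rename Sum.inr : MvPolynomial (Fin d) ℤ →ₐ[ℤ] MvPolynomial (Fin n ⊕ Fin d) ℤ).range).comap (invZ2 n d).val

theorem Bs_span (b : invZ2 n d) (hb : b ∈ Bs n d) : b ∈ Submodule.span ℤ (Set.range (sdet d (hR n d))) := by
  have key : ∀ p : MvPolynomial (Fin d) ℤ, ∃ r ∈ Submodule.span ℤ (Set.range (sdet d (hR n d))), asym n d (rename Sum.inr p) = Dlt n d * (r : MvPolynomial (Fin n ⊕ Fin d) ℤ) := by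
    intro p
    induction p using MvPolynomial.induction_on' with
    | monomial m c =>
      refine ⟨c • (sdet d (hR n d) (fun i => m i + (d - 1 - (i : ℕ)))),
        Submodule.smul_mem _ _ (Submodule.subset_span ⟨_, rfl⟩), ?_⟩
      have h : rename Sum.inr (monomial m c : MvPolynomial (Fin d) ℤ) = c • ((∏ i : Fin n, X (Sum.inl i) ^ (0 : Fin n → ℕ) i) * ∏ j, yS n d j ^ m j) := by
        rw [monomial_eq, Finsupp.prod_fintype _ _ (by simp), smul_eq_C_mul]
        simp [yS]
      rw [h, map_smul, asym_mon, SetLike.val_smul, mul_smul_comm]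
      simp
    | add p q hp hq =>
      obtain ⟨r, hr, hr2⟩ := hp
      obtain ⟨s, hs, hs2⟩ := hq
      refine ⟨r + s, Submodule.add_mem _ hr hs, ?_⟩
      rw [map_add, map_add, hr2, hs2]
      push_cast
      ring
  obtain ⟨p, hp⟩ := hb
  obtain ⟨r, hr, hr2⟩ := key p
  have hp : rename Sum.inr p = (b : MvPolynomial (Fin n ⊕ Fin d) ℤ) := hp
  rw [hp, asym_of_mem] at hr2
  have := Subtype.ext (mul_left_cancel₀ Dlt_ne hr2)
  rwa [this]

theorem sdet_Bs (β : Fin d → ℕ) : sdet d (hR n d) β ∈ Bs n d := by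
  refine ⟨sdet d (fun r => hsymm (Fin d) ℤ r) β, ?_⟩
  have h1 := sdet_map (invZ2 n d).val.toRingHom d (hR n d) β
  have h2 := sdet_map (rename Sum.inr : MvPolynomial (Fin d) ℤ →ₐ[ℤ] MvPolynomial (Fin n ⊕ Fin d) ℤ).toRingHom d (fun r => hsymm (Fin d) ℤ r) β
  exact h2.trans h1.symm

def Tset (n k d : ℕ) : Set (invZ2 n d) := {r | ∃ a, SubSt d n d a ∧ ∃ β ∈ BSet d k, r = (∏ i, xR n d i ^ a i) * sdet d (hR n d) β}

theorem spanning {Q : Type} [CommRing Q] (f : invZ2 n d →+* Q) (hfs : Function.Surjective f) (k : ℕ) (hdk : d ≤ k) (hdn : d ≤ n) (p : ℕ → ℤ) (hp0 : p 0 = 1) (hpk : ∀ a, k < a → p a = 0)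
    (hXY : ∀ r, n - d < r → f (⟨genXYZ n d r, genXYZ_mem r⟩ : invZ2 n d) = 0)
    (hPow : ∀ i, f (⟨genPowZ n d i, genPowZ_mem i⟩ : invZ2 n d) = 0)
    (hα : ∀ r, k - d < r → PowerSeries.coeff r (PowerSeries.mk (fun a => algebraMap ℤ Q ((-1) ^ a * p a)) * PowerSeries.mk (fun r => f (hR n d r))) = 0) :
    Submodule.span ℤ (f '' Tset n k d) = ⊤ := by
  -- reduction of Schur determinants
  have hrow_red := rec_reduce k p hp0 (hrow d (fun r => f (hR n d r))) (hrow_rec d k hdk p _ hpk hα)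
  have hsd : ∀ β, f (sdet d (hR n d) β) ∈ Submodule.span ℤ ((fun β => f (sdet d (hR n d) β)) '' BSet d k) := by
    intro β
    rw [Set.image_congr (fun β _ => sdet_map f d (hR n d) β), sdet_map]
    exact sdet_reduce d k _ _ hrow_red β
  have hBs : ∀ b ∈ Bs n d, ∀ a, SubSt d n d a → f b * ∏ i, f (xR n d i) ^ a i ∈ Submodule.span ℤ (f '' Tset n k d) := by
    intro b hb a ha
    have h1 := Bs_span b hb
    clear hb
    have h2 : f b ∈ Submodule.span ℤ ((fun β => f (sdet d (hR n d) β)) '' BSet d k) := by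
      induction h1 using Submodule.span_induction with
      | mem b hb => obtain ⟨β, rfl⟩ := hb; exact hsd β
      | zero => rw [map_zero]; exact zero_mem _
      | add x y _ _ hx hy => rw [map_add]; exact add_mem hx hy
      | smul c x _ hx => rw [map_zsmul]; exact Submodule.smul_mem _ _ hx
    generalize f b = q at h2
    induction h2 using Submodule.span_induction with
    | mem q hq =>
      obtain ⟨β, hβ, rfl⟩ := hq
      refine Submodule.subset_span ⟨_, ⟨a, ha, β, hβ, rfl⟩, ?_⟩
      simp [mul_comm]
    | zero => rw [zero_mul]; exact zero_mem _
    | add x y _ _ hx hy => rw [add_mul]; exact add_mem hx hy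
    | smul c x _ hx => rw [smul_mul_assoc]; exact Submodule.smul_mem _ _ hx
  let _ : Algebra (Bs n d) Q := (f.comp (Bs n d).val.toRingHom).toAlgebra
  let eB : ℕ → Bs n d := fun r => ⟨eR n d r, ⟨esymm (Fin d) ℤ r, rfl⟩⟩
  have heB0 : eB 0 = 1 := by
    apply Subtype.ext; apply Subtype.ext
    simp [eB, eR, eYZ]
  have hmap : (fpoly d eB).map (algebraMap (Bs n d) Q) = fpoly d (fun r => f (eR n d r)) := by
    exact fpoly_map _ d eB
  have hsp := span_sub d n (Bs n d) Q (fun i => f (xR n d i)) (fpoly d eB) 1 d 0 (fpoly_monic d eB heB0)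
    Polynomial.monic_one (fpoly_natDegree d eB heB0) Polynomial.natDegree_one (by simp) (by
      intro i
      rw [one_mul, ← Polynomial.eval_map_algebraMap, hmap, ← genPow_eval]
      exact hPow i) (by
      rw [hmap]
      apply fpoly_dvd n d hdn _ (fun r => f (hR n d r)) _ _ (hE_R f)
      · intro r hr
        rw [coeff_genXY f r, hXY r hr, mul_zero]
      · intro r hr
        have : eR n d r = 0 := by
          apply Subtype.ext
          change eYZ n d r = 0
          rw [eYZ, ← aeval_yS_int]
          exact esymm_zero_of_lt _ _ hr
        rw [this, map_zero]) (by
      rw [eq_top_iff]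
      intro q _
      obtain ⟨r, rfl⟩ := hfs q
      have hr : r ∈ Submodule.span ℤ (Mset n d) := by rw [Mspan_top]; trivial
      induction hr using Submodule.span_induction with
      | mem r hr =>
        obtain ⟨a, β, rfl⟩ := hr
        rw [map_mul, map_prod]
        refine mul_mem (prod_mem fun i _ => ?_) ?_
        · rw [map_pow]
          exact pow_mem (Algebra.subset_adjoin (Set.mem_range_self i)) _
        · exact Subalgebra.algebraMap_mem (Algebra.adjoin (Bs n d) _) (⟨_, sdet_Bs β⟩ : Bs n d)
      | zero => rw [map_zero]; exact zero_mem _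
      | add x y _ _ hx hy => rw [map_add]; exact add_mem (hx trivial) (hy trivial)
      | smul c x _ hx => 
        rw [map_zsmul, zsmul_eq_mul]
        refine mul_mem ?_ (hx trivial)
        have h9 := Subalgebra.algebraMap_mem (Algebra.adjoin (Bs n d) (Set.range fun i => f (xR n d i))) ((c : ℤ) : Bs n d)
        rwa [map_intCast] at h9)
  rw [eq_top_iff]
  intro q _
  have hq : q ∈ subSpan (Bs n d) d n d (fun i => f (xR n d i)) := by rw [hsp]; trivial
  have key : ∀ b : Bs n d, b • q ∈ Submodule.span ℤ (f '' Tset n k d) := by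
    rw [subSpan] at hq
    induction hq using Submodule.span_induction with
    | mem q hq =>
      obtain ⟨a, ha, rfl⟩ := hq
      intro b
      rw [Algebra.smul_def]
      exact hBs b b.2 a ha
    | zero => intro b; rw [smul_zero]; exact zero_mem _
    | add x y _ _ hx hy => intro b; rw [smul_add]; exact add_mem (hx trivial b) (hy trivial b)
    | smul c x _ hx => intro b; rw [smul_smul]; exact hx trivial _
  have := key 1
  rwa [one_smul] at this

end Span2


theorem ev_indep {R ι P : Type*} [CommRing R] [Fintype ι] [Fintype P] (c : ι → R) (ev : P → (R →+* ℤ))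
    (hev : Function.Injective ev) (hcard : Fintype.card ι ≤ Fintype.card P)
    (hsp : ∀ r, ∃ a : ι → ℤ, ∀ p, ev p r = ∑ i, a i * ev p (c i)) (a : ι → ℤ)
    (ha : ∀ p, ∑ i, a i * ev p (c i) = 0) : a = 0 := by
  let M : P → ι → ℚ := fun p i => (ev p (c i) : ℚ)
  have hLI : LinearIndependent ℚ M := by
    have h1 := linearIndependent_monoidHom R ℚ
    have h2 := h1.comp (fun p : P => ((Int.castRingHom ℚ).comp (ev p)).toMonoidHom) (by
      intro p q hpq
      apply hev
      ext r
      have := DFunLike.congr_fun hpq r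
      simpa using this)
    rw [Fintype.linearIndependent_iff] at h2 ⊢
    intro b hb
    apply h2
    ext r
    obtain ⟨a, ha⟩ := hsp r
    have h3 : ∀ i, ∑ p, b p * (ev p (c i) : ℚ) = 0 := by
      intro i
      have := congrFun hb i
      simpa [M] using this
    simp only [Finset.sum_apply, Pi.smul_apply, Function.comp, smul_eq_mul, Pi.zero_apply]
    calc _ = ∑ p, b p * ∑ i, (a i : ℚ) * (ev p (c i) : ℚ) := by
          apply Finset.sum_congr rfl
          intro p _
          congr 1
          have := congrArg (fun z : ℤ => (z : ℚ)) (ha p)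
          push_cast at this
          exact this
      _ = ∑ i, (a i : ℚ) * ∑ p, b p * (ev p (c i) : ℚ) := by
          simp only [Finset.mul_sum]
          rw [Finset.sum_comm]
          apply Finset.sum_congr rfl
          intro i _
          apply Finset.sum_congr rfl
          intro p _
          ring
      _ = 0 := by simp [h3]
  have hle := hLI.fintype_card_le_finrank
  rw [Module.finrank_fintype_fun_eq_card] at hle
  have htop := hLI.span_eq_top_of_card_eq_finrank' (by rw [Module.finrank_fintype_fun_eq_card]; omega)
  let φ : (ι → ℚ) →ₗ[ℚ] ℚ := ∑ i, (a i : ℚ) • LinearMap.proj i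
  have hφ : ∀ v, φ v = ∑ i, (a i : ℚ) * v i := by intro v; simp [φ]
  have hz : φ = 0 := by
    apply LinearMap.ext_on_range htop
    intro p
    rw [hφ, LinearMap.zero_apply]
    simp only [M]
    exact_mod_cast ha p
  classical
  ext i
  have := hφ (Pi.single i 1)
  rw [hz] at this
  simp [Pi.single_apply] at this
  exact_mod_cast this.symm

section Ev
variable {n d k : ℕ}

noncomputable def evp (n : ℕ) (y : Fin d → ℤ) (x : Fin n → Fin d) : invZ2 n d →+* ℤ :=
  ((aeval (Sum.elim (fun i => y (x i)) y) : MvPolynomial (Fin n ⊕ Fin d) ℤ →ₐ[ℤ] ℤ).comp (invZ2 n d).val).toRingHom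

theorem evp_x (y : Fin d → ℤ) (x : Fin n → Fin d) (i : Fin n) : evp n y x (xR n d i) = y (x i) := by
  change aeval _ (X (Sum.inl i) : MvPolynomial (Fin n ⊕ Fin d) ℤ) = _
  simp

theorem evp_h (y : Fin d → ℤ) (x : Fin n → Fin d) (r : ℕ) : evp n y x (hR n d r) = aeval y (hsymm (Fin d) ℤ r) := by
  change aeval _ (rename Sum.inr _ : MvPolynomial (Fin n ⊕ Fin d) ℤ) = _
  rw [aeval_rename, Sum.elim_comp_inr]

theorem evp_e (y : Fin d → ℤ) (x : Fin n → Fin d) (r : ℕ) : evp n y x (eR n d r) = aeval y (esymm (Fin d) ℤ r) := by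
  change aeval _ (rename Sum.inr _ : MvPolynomial (Fin n ⊕ Fin d) ℤ) = _
  rw [aeval_rename, Sum.elim_comp_inr]

theorem evp_genPow (y : Fin d → ℤ) (x : Fin n → Fin d) (i : Fin n) :
    evp n y x ⟨genPowZ n d i, genPowZ_mem i⟩ = 0 := by
  rw [genPow_eval, fpoly, Polynomial.eval_finsetSum, evp_x]
  have := fpoly_eval_root y (x i) 0
  simp only [zero_add] at this
  refine Eq.trans ?_ this
  apply Finset.sum_congr rfl
  intro a _
  simp [evp_e]

theorem evp_genXY (y : Fin d → ℤ) (x : Fin n → Fin d) (hx : Function.Surjective x) (r : ℕ) (hr : n - d < r) :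
    evp n y x ⟨genXYZ n d r, genXYZ_mem r⟩ = 0 := by
  have h1 := coeff_genXY (evp n y x) r
  have h2 := coeff_EH_zero (fun i => y (x i)) y (Function.surjInv hx) (Function.injective_surjInv hx)
    (fun j => congrArg y (Function.surjInv_eq hx j)) r hr
  simp only [evp_h, evp_x] at h1
  rw [h2] at h1
  have h3 : ((-1 : ℤ) ^ r) ≠ 0 := pow_ne_zero _ (by norm_num)
  exact (mul_eq_zero.mp h1.symm).resolve_left h3

theorem evp_alpha (N : ℤ) (β : Fin d → ℕ) (hβ : β ∈ BSet d k) (r : ℕ) (hr : k - d < r) :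
    PowerSeries.coeff r (PowerSeries.mk (fun a => (-1) ^ a * aeval (fun i : Fin k => N * ((i : ℕ) : ℤ)) (esymm (Fin k) ℤ a)) *
      PowerSeries.mk (fun r => aeval (fun j => N * (β j : ℤ)) (hsymm (Fin d) ℤ r))) = 0 := by
  have h := ps_esymm (fun i : Fin k => N * ((i : ℕ) : ℤ))
  have h2 := coeff_EH_zero (fun i : Fin k => N * ((i : ℕ) : ℤ)) (fun j => N * (β j : ℤ)) (fun j => ⟨β j, hβ.2 j⟩)
    (fun a b hab => hβ.1.injective (by simpa using hab)) (fun j => rfl) r hr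
  rw [← h] at h2
  exact h2

theorem dvd_esymm (N : ℤ) (a : ℕ) (ha : 1 ≤ a) : N ∣ aeval (fun i : Fin k => N * ((i : ℕ) : ℤ)) (esymm (Fin k) ℤ a) := by
  rw [esymm, map_sum]
  apply Finset.dvd_sum
  intro s hs
  rw [Finset.mem_powersetCard] at hs
  obtain ⟨i, hi⟩ := Finset.card_pos.mp (by omega : 0 < s.card)
  rw [map_prod]
  refine dvd_trans ?_ (Finset.dvd_prod_of_mem _ hi)
  simp

theorem evp_inj (N : ℤ) (hN : N ≠ 0) (β β' : Fin d → ℕ) (hβ : β ∈ BSet d k) (hβ' : β' ∈ BSet d k)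
    (x x' : Fin n → Fin d) (hx : Function.Surjective x) (hx' : Function.Surjective x')
    (h : evp n (fun j => N * (β j : ℤ)) x = evp n (fun j => N * (β' j : ℤ)) x') : β = β' ∧ x = x' := by
  have h1 : ∀ i, β (x i) = β' (x' i) := by
    intro i
    have := DFunLike.congr_fun h (xR n d i)
    rw [evp_x, evp_x] at this
    exact_mod_cast mul_left_cancel₀ hN this
  have h2 : Set.range β = Set.range β' := by
    rw [← hx.range_comp, ← hx'.range_comp]
    congr 1
    ext i
    exact h1 i
  have h3 : β ∘ Fin.rev = β' ∘ Fin.rev := by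
    rw [← StrictMono.range_inj (f := β ∘ Fin.rev) (g := β' ∘ Fin.rev) (fun i j hij => hβ.1 (Fin.rev_lt_rev.mpr hij)) (fun i j hij => hβ'.1 (Fin.rev_lt_rev.mpr hij)),
      Fin.rev_surjective.range_comp, Fin.rev_surjective.range_comp, h2]
  have h4 : β = β' := by
    ext j
    have := congrFun h3 (Fin.rev j)
    simpa using this
  refine ⟨h4, ?_⟩
  subst h4
  ext i
  rw [hβ.1.injective (h1 i)]

theorem BSet_finite (d k : ℕ) : Finite (BSet d k) := by
  let f : BSet d k → (Fin d → Fin k) := fun β i => ⟨β.1 i, β.2.2 i⟩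
  apply Finite.of_injective f
  intro a b hab
  ext i
  have := congrFun hab i
  simpa [f] using this

end Ev


section Fin1
variable {n d k : ℕ}

abbrev Idx (n k d : ℕ) := BSet d k × {a : Fin n → ℕ // SubSt d n d a}
abbrev Pts (n k d : ℕ) := BSet d k × {x : Fin n → Fin d // Function.Surjective x}

noncomputable def cfam (n k d : ℕ) (i : Idx n k d) : invZ2 n d :=
  (∏ j, xR n d j ^ i.2.1 j) * sdet d (hR n d) i.1.1

theorem range_cfam : Set.range (cfam n k d) = Tset n k d := by
  ext r
  constructor
  · rintro ⟨i, rfl⟩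
    exact ⟨i.2.1, i.2.2, i.1.1, i.1.2, rfl⟩
  · rintro ⟨a, ha, β, hβ, rfl⟩
    exact ⟨(⟨β, hβ⟩, ⟨a, ha⟩), rfl⟩

theorem N_dvd (hd : 1 ≤ d) (hk : d ≤ k) (hn : k ≤ n) [Fintype (Idx n k d)] (m : Idx n k d → ℤ)
    (hm : ∑ i, m i • cfam n k d i ∈ Ideal.span (Subtype.val ⁻¹' GgensZ n k d : Set (invZ2 n d)))
    (N : ℤ) (hN : N ≠ 0) (i : Idx n k d) : N ∣ m i := by
  have := BSet_finite d k
  have := subSt_finite n d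
  have : Fintype (Pts n k d) := Fintype.ofFinite _
  let ev : Pts n k d → (invZ2 n d →+* ℤ) := fun p => evp n (fun j => N * (p.1.1 j : ℤ)) p.2.1
  have hev : Function.Injective ev := by
    intro p q hpq
    obtain ⟨h1, h2⟩ := evp_inj N hN _ _ p.1.2 q.1.2 _ _ p.2.2 q.2.2 hpq
    exact Prod.ext (Subtype.ext h1) (Subtype.ext h2)
  have hcard : Fintype.card (Idx n k d) ≤ Fintype.card (Pts n k d) := by
    rw [← Nat.card_eq_fintype_card, ← Nat.card_eq_fintype_card, Nat.card_prod, Nat.card_prod]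
    exact Nat.mul_le_mul_left _ (subSt_card n d hd)
  let F : invZ2 n d →+* (Pts n k d → ℤ) := RingHom.pi ev
  let f : invZ2 n d →+* F.range := F.rangeRestrict
  have hfs : Function.Surjective f := F.rangeRestrict_surjective
  let π : Pts n k d → (F.range →+* ℤ) := fun p => (Pi.evalRingHom (fun _ => ℤ) p).comp F.range.subtype
  have hπ : ∀ p r, π p (f r) = ev p r := fun p r => rfl
  have hπ0 : ∀ q : F.range, (∀ p, π p q = 0) → q = 0 := by
    intro q hq
    apply Subtype.ext
    funext p
    exact hq p
  let pp : ℕ → ℤ := fun a => aeval (fun i : Fin k => N * ((i : ℕ) : ℤ)) (esymm (Fin k) ℤ a)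
  have hpp0 : pp 0 = 1 := by simp [pp]
  have hXY : ∀ r, n - d < r → f (⟨genXYZ n d r, genXYZ_mem r⟩ : invZ2 n d) = 0 := by
    intro r hr
    apply hπ0
    intro p
    rw [hπ]
    exact evp_genXY _ _ p.2.2 r hr
  have hPow : ∀ i, f (⟨genPowZ n d i, genPowZ_mem i⟩ : invZ2 n d) = 0 := by
    intro i
    apply hπ0
    intro p
    rw [hπ]
    exact evp_genPow _ _ i
  have hα : ∀ r, k - d < r → PowerSeries.coeff r (PowerSeries.mk (fun a => algebraMap ℤ F.range ((-1) ^ a * pp a)) * PowerSeries.mk (fun r => f (hR n d r))) = 0 := by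
    intro r hr
    apply hπ0
    intro p
    rw [← evp_alpha N p.1.1 p.1.2 r hr, PowerSeries.coeff_mul, PowerSeries.coeff_mul, map_sum]
    apply Finset.sum_congr rfl
    intro ab _
    simp only [PowerSeries.coeff_mk]
    rw [map_mul, hπ, ← evp_h _ p.2.1]
    congr 1
  have hspan := spanning f hfs k hk (hk.trans hn) pp hpp0 (fun a ha => esymm_zero_of_lt _ _ ha) hXY hPow hα
  have hsp : ∀ r, ∃ a : Idx n k d → ℤ, ∀ p, ev p r = ∑ i, a i * ev p (cfam n k d i) := by
    intro r
    have h1 : f r ∈ Submodule.span ℤ (Set.range (f ∘ cfam n k d)) := by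
      rw [Set.range_comp, range_cfam, hspan]; trivial
    obtain ⟨a, ha⟩ := (Submodule.mem_span_range_iff_exists_fun ℤ).mp h1
    refine ⟨a, fun p => ?_⟩
    rw [← hπ, ← ha, map_sum]
    apply Finset.sum_congr rfl
    intro i _
    rw [map_zsmul, Function.comp, hπ, smul_eq_mul]
  have hI : Ideal.span (Subtype.val ⁻¹' GgensZ n k d : Set (invZ2 n d)) ≤ Ideal.comap f (Ideal.span {(N : F.range)}) := by
    rw [Ideal.span_le]
    rintro ⟨g, hg0⟩ ((⟨r, hr, hg⟩ | ⟨r, hr, hg⟩) | ⟨i, hg⟩)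
    · change g = _ at hg
      subst hg
      change f (hR n d r) ∈ Ideal.span {(N : F.range)}
      have h1 := hα r hr
      rw [PowerSeries.coeff_mul, Finset.Nat.sum_antidiagonal_eq_sum_range_succ_mk, Finset.sum_range_succ'] at h1
      simp only [PowerSeries.coeff_mk, pow_zero, hpp0, one_mul, map_one, Nat.sub_zero] at h1
      rw [eq_neg_of_add_eq_zero_right h1]
      refine neg_mem (sum_mem fun j _ => Ideal.mul_mem_right _ _ ?_)
      obtain ⟨t, ht⟩ := dvd_esymm (k := k) N (j + 1) (by omega)
      rw [Ideal.mem_span_singleton]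
      refine ⟨(((-1) ^ (j + 1) * t : ℤ) : F.range), ?_⟩
      simp only [pp]
      rw [ht, ← Int.cast_mul, eq_intCast]
      congr 1
      ring
    · change g = _ at hg
      subst hg
      change f _ ∈ Ideal.span {(N : F.range)}
      rw [hXY r hr]
      exact zero_mem _
    · change g = _ at hg
      subst hg
      change f _ ∈ Ideal.span {(N : F.range)}
      rw [hPow i]
      exact zero_mem _
  have h1 := hI hm
  rw [Ideal.mem_comap, Ideal.mem_span_singleton] at h1
  obtain ⟨q, hq⟩ := h1
  obtain ⟨r, rfl⟩ := hfs q
  obtain ⟨a, ha⟩ := hsp r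
  have h2 := ev_indep (cfam n k d) ev hev hcard hsp (fun i => m i - N * a i) (by
    intro p
    have h3 := congrArg (π p) hq
    rw [map_mul, hπ, hπ, ha, map_intCast, map_sum, Int.cast_id, Finset.mul_sum] at h3
    simp only [map_zsmul, smul_eq_mul] at h3
    simp only [sub_mul, Finset.sum_sub_distrib]
    rw [h3, sub_eq_zero]
    apply Finset.sum_congr rfl
    intro i _
    ring)
  have h3 := congrFun h2 i
  simp only [Pi.zero_apply] at h3
  exact ⟨a i, by linarith⟩

theorem cfam_indep (hd : 1 ≤ d) (hk : d ≤ k) (hn : k ≤ n) (I : Ideal (invZ2 n d))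
    (hI : I = Ideal.span (Subtype.val ⁻¹' GgensZ n k d : Set (invZ2 n d))) :
    LinearIndependent ℤ (fun i => Ideal.Quotient.mk I (cfam n k d i)) := by
  have := BSet_finite d k
  have := subSt_finite n d
  have : Fintype (Idx n k d) := Fintype.ofFinite _
  rw [Fintype.linearIndependent_iff]
  intro m hm i
  have h1 : ∑ i, m i • cfam n k d i ∈ I := by
    rw [← Ideal.Quotient.eq_zero_iff_mem, map_sum, ← hm]
    apply Finset.sum_congr rfl
    intro i _
    rw [map_zsmul]
  rw [hI] at h1
  have h2 := N_dvd hd hk hn m h1 (|m i| + 1) (by positivity) i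
  apply Int.eq_zero_of_abs_lt_dvd h2
  omega

theorem spanning_gen {Q : Type} [CommRing Q] [inst : Module ℤ Q] (hk : d ≤ k) (hn : k ≤ n) (f : invZ2 n d →+* Q) (hs : Function.Surjective f)
    (hf : ∀ g ∈ (Subtype.val ⁻¹' GgensZ n k d : Set (invZ2 n d)), f g = 0) :
    Submodule.span ℤ (f '' Tset n k d) = ⊤ := by
  obtain rfl : inst = AddCommGroup.toIntModule Q := Subsingleton.elim _ _
  refine spanning f hs k hk (hk.trans hn) (fun a => if a = 0 then 1 else 0) (by simp)
    (fun a ha => if_neg (by omega)) ?_ ?_ ?_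
  · intro r hr
    exact hf _ (Or.inl (Or.inr ⟨r, hr, rfl⟩))
  · intro i
    exact hf _ (Or.inr ⟨i, rfl⟩)
  · intro r hr
    have h0 : (PowerSeries.mk fun a => algebraMap ℤ Q ((-1) ^ a * if a = 0 then 1 else 0)) = 1 := by
      apply PowerSeries.ext
      intro a
      rw [PowerSeries.coeff_mk, PowerSeries.coeff_one]
      split_ifs with h <;> simp [h]
    rw [h0, one_mul, PowerSeries.coeff_mk]
    exact hf _ (Or.inl (Or.inl ⟨r, hr, rfl⟩))

theorem quot_wrap {R : Type} [CommRing R] (I : Ideal R) (T : Set R)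
    (H : ∀ (Q : Type) [CommRing Q] (f : R →+* Q), Function.Surjective f → (∀ g ∈ I, f g = 0) → Submodule.span ℤ (f '' T) = ⊤) :
    Submodule.span ℤ (Ideal.Quotient.mk I '' T) = ⊤ := by
  refine H (R ⧸ I) (Ideal.Quotient.mk I) Ideal.Quotient.mk_surjective ?_
  intro g hg
  rwa [Ideal.Quotient.eq_zero_iff_mem]

theorem spanning_I (hk : d ≤ k) (hn : k ≤ n) (I : Ideal (invZ2 n d))
    (hI : I = Ideal.span (Subtype.val ⁻¹' GgensZ n k d : Set (invZ2 n d))) :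
    Submodule.span ℤ (Ideal.Quotient.mk I '' Tset n k d) = ⊤ := by
  apply quot_wrap
  intro Q _ f hs hf
  apply spanning_gen hk hn f hs
  intro g hg
  apply hf
  rw [hI]
  exact Ideal.subset_span hg

theorem schur_sdet (lam : Fin d → ℕ) : schurPoly d lam = sdet d (hsymm (Fin d) ℤ) (fun i => lam i + (d - 1 - (i : ℕ))) := by
  rw [schurPoly, sdet]
  congr 1
  ext1 i j
  simp only [Matrix.of_apply, hrow, hzf, hsymmZidx]
  have : (lam i : ℤ) - ((i : ℕ) : ℤ) + ((j : ℕ) : ℤ) = ((lam i + (d - 1 - (i : ℕ)) : ℕ) : ℤ) - ((d : ℤ) - 1) + (j : ℕ) := by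
    have := i.2
    omega
  rw [this]

theorem val_T (a : Fin n → ℕ) (β : Fin d → ℕ) : (((∏ i, xR n d i ^ a i) * sdet d (hR n d) β : invZ2 n d) : MvPolynomial (Fin n ⊕ Fin d) ℤ) =
    (∏ j, X (Sum.inl j) ^ a j) * rename Sum.inr (sdet d (hsymm (Fin d) ℤ) β) := by
  have h1 := sdet_map (invZ2 n d).val.toRingHom d (hR n d) β
  have h2 := sdet_map (rename Sum.inr : MvPolynomial (Fin d) ℤ →ₐ[ℤ] MvPolynomial (Fin n ⊕ Fin d) ℤ).toRingHom d (fun r => hsymm (Fin d) ℤ r) β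
  have h3 : ((sdet d (hR n d) β : invZ2 n d) : MvPolynomial (Fin n ⊕ Fin d) ℤ) = rename Sum.inr (sdet d (hsymm (Fin d) ℤ) β) := h1.trans h2.symm
  rw [MulMemClass.coe_mul, h3]
  congr 1
  push_cast
  rfl

theorem preimage_C (hd : 1 ≤ d) (hk : d ≤ k) : (Subtype.val ⁻¹' CsetZ n k d : Set (invZ2 n d)) = Tset n k d := by
  ext r
  constructor
  · rintro ⟨a, ha, lam, hl, hlk, hr⟩
    refine ⟨a, (isSubstaircase_iff n d hd a).mp ha, fun i => lam i + (d - 1 - (i : ℕ)), ⟨?_, ?_⟩, ?_⟩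
    · intro i j hij
      have h1 := hl hij.le
      have h2 : (i : ℕ) < j := hij
      have h3 := j.2
      change lam j + (d - 1 - (j : ℕ)) < lam i + (d - 1 - (i : ℕ))
      omega
    · intro i
      have := hlk i
      have := i.2
      change lam i + (d - 1 - (i : ℕ)) < k
      omega
    · apply Subtype.ext
      rw [val_T, hr, schur_sdet]
  · rintro ⟨a, ha, β, ⟨hβ, hβk⟩, rfl⟩
    have hge : ∀ t (i : Fin d), d - 1 - (i : ℕ) = t → t ≤ β i := by
      intro t
      induction t with
      | zero => intro i _; omega
      | succ t ih =>
        intro i hi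
        have h1 := ih ⟨i + 1, by omega⟩ (by simp only; omega)
        have h2 := hβ (show i < ⟨i + 1, by omega⟩ from Nat.lt_succ_self _)
        omega
    have hle : ∀ i : Fin d, β i + i < k := by
      rintro ⟨i, hi⟩
      induction i with
      | zero => exact hβk _
      | succ i ih =>
        have h1 := ih (by omega)
        have h2 := hβ (show (⟨i, by omega⟩ : Fin d) < ⟨i + 1, hi⟩ from Nat.lt_succ_self _)
        simp only at h1 ⊢
        omega
    refine ⟨a, (isSubstaircase_iff n d hd a).mpr ha, fun i => β i - (d - 1 - (i : ℕ)), ?_, ?_, ?_⟩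
    · have hstep : ∀ t (i j : Fin d), (j : ℕ) = i + t → β j + t ≤ β i := by
        intro t
        induction t with
        | zero => intro i j h; have : i = j := Fin.ext (by omega); subst this; omega
        | succ t ih =>
          intro i j h
          have h1 := ih i ⟨i + t, by omega⟩ rfl
          have h2 := hβ (show (⟨i + t, by omega⟩ : Fin d) < j from by rw [Fin.lt_def]; simp only; omega)
          omega
      intro i j hij
      have hij : (i : ℕ) ≤ j := hij
      have h1 := hstep (j - i) i j (by omega)
      change β j - (d - 1 - (j : ℕ)) ≤ β i - (d - 1 - (i : ℕ))
      have := j.2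
      omega
    · intro i
      have h1 := hle i
      have := i.2
      change β i - (d - 1 - (i : ℕ)) ≤ k - d
      omega
    · rw [val_T, schur_sdet]
      congr 3
      ext i
      have := hge _ i rfl
      omega

end Fin1

/-- The set `G` generates the ideal `J_{n,k,d} ∩ ℤ[x,y]^{S_d}` as an
ideal of the invariant ring, and `C_{n,k,d}` descends to a `ℤ`-module basis of
`ℤ[x,y]^{S_d}/(J_{n,k,d} ∩ ℤ[x,y]^{S_d})`. -/
theorem G_generates_and_CsetZ_basis (n k d : ℕ) (hd : 1 ≤ d) (hk : d ≤ k) (hn : k ≤ n) :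
    Ideal.comap (invZ2 n d).val (Ideal.span (GgensZ n k d)) =
      Ideal.span (Subtype.val ⁻¹' GgensZ n k d : Set ↥(invZ2 n d)) ∧
    LinearIndependent ℤ (fun q : ↥(Subtype.val ⁻¹' CsetZ n k d : Set ↥(invZ2 n d)) =>
      Ideal.Quotient.mk (Ideal.comap (invZ2 n d).val (Ideal.span (GgensZ n k d)))
        (q : ↥(invZ2 n d))) ∧
    Submodule.span ℤ
      (⇑(Ideal.Quotient.mk (Ideal.comap (invZ2 n d).val (Ideal.span (GgensZ n k d)))) ''
        (Subtype.val ⁻¹' CsetZ n k d)) = ⊤ := by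
  have hI := comap_eq (n := n) (d := d) (GgensZ n k d) (Ggens_mem k)
  refine ⟨hI, ?_, ?_⟩
  · have h1 := cfam_indep hd hk hn _ hI
    have hinj : Function.Injective (cfam n k d) := by
      have := h1.injective
      exact fun a b hab => this (by simp only [hab])
    have h2 := (linearIndepOn_range_iff (R := ℤ) hinj (Ideal.Quotient.mk (Ideal.comap (invZ2 n d).val (Ideal.span (GgensZ n k d))))).mpr h1
    rw [range_cfam, ← preimage_C hd hk] at h2
    exact h2
  · rw [preimage_C hd hk]
    exact spanning_I hk hn _ hI
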